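/- Optimal scaling of MaxWeight in a simultaneous heavy-traffic and large-switch regime (Corollary 6.2, MaxWeight part). Fix β > 4 and a sequence (γ_n)_{n≥1} of positive reals with 0 < c ≤ γ_n ≤ C < ∞ for all n and 2γ_n ≤ n^{β−1}. For each n, consider an n×n switch whose arrival entries are independent Bernoulli with P(a_{ij}=1) = (1 − γ_n n^{−β})/n, operated under MaxWeight, and let π^{(n)} be an invariant distribution of the corresponding Markov chain. Then ( E_{π^{(n)}}[∑_{ij} q̄^{(n)}_{ij}] − n^{1+β}/γ_n ) / n^{1+β} → 0 as n → ∞; in particular, E_{π^{(n)}}[∑_{ij} q̄^{(n)}_{ij}] = Θ(n^{1+β}). -/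

import Mathlib

open scoped BigOperators ENNReal

namespace SwitchModel

/-- Next queue state: `q⁺_{ij} = max(q_{ij} + a_{ij} − s_{ij}, 0)` (truncated `ℕ` subtraction). -/
def nextQ (n : ℕ) (q a s : Fin n → Fin n → ℕ) : Fin n → Fin n → ℕ :=
  fun i j => q i j + a i j - s i j

/-- A 0–1 matrix with at most one 1 per row and per column. -/
def IsSchedule (n : ℕ) (s : Fin n → Fin n → ℕ) : Prop :=
  (∀ i j, s i j ≤ 1) ∧ (∀ i, (∑ j, s i j) ≤ 1) ∧ (∀ j, (∑ i, s i j) ≤ 1)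

/-- A permutation matrix: exactly one 1 per row and per column. -/
def IsPerm (n : ℕ) (s : Fin n → Fin n → ℕ) : Prop :=
  (∀ i j, s i j ≤ 1) ∧ (∀ i, (∑ j, s i j) = 1) ∧ (∀ j, (∑ i, s i j) = 1)

/-- MaxWeight selection: `sched q` is a permutation matrix maximizing `∑ q_{ij} s_{ij}`. -/
def IsMaxWeight (n : ℕ) (sched : (Fin n → Fin n → ℕ) → (Fin n → Fin n → ℕ)) : Prop :=
  ∀ q, IsPerm n (sched q) ∧
    ∀ s, IsPerm n s → (∑ i, ∑ j, q i j * s i j) ≤ (∑ i, ∑ j, q i j * sched q i j)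

/-- Joint arrival probability: the entries are mutually independent with marginals `A i j`. -/
noncomputable def jointA (n : ℕ) (A : Fin n → Fin n → ℕ → ℝ≥0∞) (a : Fin n → Fin n → ℕ) : ℝ≥0∞ :=
  ∏ i, ∏ j, A i j (a i j)

/-- `A i j` is a probability distribution on `ℕ` supported on `[0, amax]`,
with mean `lam i j` and variance `(sig i j)^2`. -/
def ArrivalDist (n : ℕ) (A : Fin n → Fin n → ℕ → ℝ≥0∞)
    (lam sig : Fin n → Fin n → ℝ) (amax : ℕ) : Prop :=
  (∀ i j, (∑' k : ℕ, A i j k) = 1) ∧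
  (∀ i j k, A i j k ≠ 0 → k ≤ amax) ∧
  (∀ i j, (∑' k : ℕ, (A i j k).toReal * (k : ℝ)) = lam i j) ∧
  (∀ i j, (∑' k : ℕ, (A i j k).toReal * ((k : ℝ) - lam i j) ^ 2) = (sig i j) ^ 2)

/-- Transition kernel of the switch under a deterministic scheduling map `sched`. -/
noncomputable def kernelMW (n : ℕ) (A : Fin n → Fin n → ℕ → ℝ≥0∞)
    (sched : (Fin n → Fin n → ℕ) → (Fin n → Fin n → ℕ))
    (q q' : Fin n → Fin n → ℕ) : ℝ≥0∞ :=
  ∑' a : Fin n → Fin n → ℕ, jointA n A a * (if nextQ n q a (sched q) = q' then 1 else 0)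

/-- Transition kernel of the switch under a randomized scheduling policy `pol`
(the schedule is chosen independently of the current arrivals). -/
noncomputable def kernelPol (n : ℕ) (A : Fin n → Fin n → ℕ → ℝ≥0∞)
    (pol : (Fin n → Fin n → ℕ) → (Fin n → Fin n → ℕ) → ℝ≥0∞)
    (q q' : Fin n → Fin n → ℕ) : ℝ≥0∞ :=
  ∑' a : Fin n → Fin n → ℕ, ∑' s : Fin n → Fin n → ℕ,
    jointA n A a * pol q s * (if nextQ n q a s = q' then 1 else 0)

/-- `pd` is an invariant (stationary) probability distribution of the kernel `P`. -/
def IsInvariant (n : ℕ)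
    (P : (Fin n → Fin n → ℕ) → (Fin n → Fin n → ℕ) → ℝ≥0∞)
    (pd : (Fin n → Fin n → ℕ) → ℝ≥0∞) : Prop :=
  (∑' q : Fin n → Fin n → ℕ, pd q) = 1 ∧
  ∀ q', (∑' q : Fin n → Fin n → ℕ, pd q * P q q') = pd q'

/-- The face `F`: nonnegative matrices with all row and column sums equal to 1. -/
def memF (n : ℕ) (ν : Fin n → Fin n → ℝ) : Prop :=
  (∀ i j, 0 ≤ ν i j) ∧ (∀ i, (∑ j, ν i j) = 1) ∧ (∀ j, (∑ i, ν i j) = 1)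

/-- Steady-state expectation of the total queue length `∑_{ij} q_{ij}`. -/
noncomputable def Etot (n : ℕ) (pd : (Fin n → Fin n → ℕ) → ℝ≥0∞) : ℝ≥0∞ :=
  ∑' q : Fin n → Fin n → ℕ, pd q * (∑ i, ∑ j, (q i j : ℝ≥0∞))

/-- Steady-state expectation of `(∑_{ij} q_{ij})²`. -/
noncomputable def Etot2 (n : ℕ) (pd : (Fin n → Fin n → ℕ) → ℝ≥0∞) : ℝ≥0∞ :=
  ∑' q : Fin n → Fin n → ℕ, pd q * (∑ i, ∑ j, (q i j : ℝ≥0∞)) ^ 2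

/-- Euclidean norm on `ℝ^{n×n}`. -/
noncomputable def normE (n : ℕ) (x : Fin n → Fin n → ℝ) : ℝ :=
  Real.sqrt (∑ i, ∑ j, x i j ^ 2)

/-- The cone `K = {x : x_{ij} = w_i + w̃_j, w, w̃ ≥ 0}`. -/
def coneK (n : ℕ) : Set (Fin n → Fin n → ℝ) :=
  {x | ∃ w wt : Fin n → ℝ, (∀ i, 0 ≤ w i) ∧ (∀ j, 0 ≤ wt j) ∧ ∀ i j, x i j = w i + wt j}

/-- Embedding of queue states into `ℝ^{n×n}`. -/
def toR (n : ℕ) (q : Fin n → Fin n → ℕ) : Fin n → Fin n → ℝ :=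
  fun i j => (q i j : ℝ)

/-- `proj` is the nearest-point projection onto the cone `K`. -/
def IsConeProj (n : ℕ) (proj : (Fin n → Fin n → ℝ) → (Fin n → Fin n → ℝ)) : Prop :=
  ∀ x, proj x ∈ coneK n ∧ ∀ y ∈ coneK n, normE n (x - proj x) ≤ normE n (x - y)

/-- Bernoulli distribution on `ℕ` with success probability `p`. -/
noncomputable def bern (p : ℝ) : ℕ → ℝ≥0∞ :=
  fun k => if k = 0 then ENNReal.ofReal (1 - p) else if k = 1 then ENNReal.ofReal p else 0

end SwitchModel

open SwitchModel Filter

namespace SwitchModel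

/-- Possible arrival matrices. -/
def arr (n : ℕ) : Finset (Fin n → Fin n → ℕ) :=
  Fintype.piFinset fun _ => Fintype.piFinset fun _ => ({0, 1} : Finset ℕ)

/-- Real Bernoulli weight. -/
noncomputable def bw (p : ℝ) (k : ℕ) : ℝ := if k = 0 then 1 - p else p

/-- Real joint weight. -/
noncomputable def wgt (n : ℕ) (p : ℝ) (a : Fin n → Fin n → ℕ) : ℝ := ∏ i, ∏ j, bw p (a i j)

/-- Expectation over the arrivals. -/
noncomputable def Ex (n : ℕ) (p : ℝ) (F : (Fin n → Fin n → ℕ) → ℝ) : ℝ :=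
  ∑ a ∈ arr n, wgt n p a * F a

lemma mem_arr {n : ℕ} {a : Fin n → Fin n → ℕ} :
    a ∈ arr n ↔ ∀ i j, a i j = 0 ∨ a i j = 1 := by
  simp [arr, Fintype.mem_piFinset]

lemma bw_nonneg {p : ℝ} (h0 : 0 ≤ p) (h1 : p ≤ 1) (k : ℕ) : 0 ≤ bw p k := by
  unfold bw; split_ifs <;> linarith

lemma wgt_nonneg {n : ℕ} {p : ℝ} (h0 : 0 ≤ p) (h1 : p ≤ 1) (a : Fin n → Fin n → ℕ) :
    0 ≤ wgt n p a :=
  Finset.prod_nonneg fun _ _ => Finset.prod_nonneg fun _ _ => bw_nonneg h0 h1 _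

lemma Ex_prod (n : ℕ) (p : ℝ) (h : Fin n → Fin n → ℕ → ℝ) :
    Ex n p (fun a => ∏ i, ∏ j, h i j (a i j)) =
      ∏ i, ∏ j, ((1 - p) * h i j 0 + p * h i j 1) := by
  unfold Ex wgt arr
  have : ∀ i j, ((1 - p) * h i j 0 + p * h i j 1) =
      ∑ k ∈ ({0, 1} : Finset ℕ), bw p k * h i j k := by
    intro i j
    rw [Finset.sum_pair (by norm_num)]
    simp [bw]
  simp_rw [this, Finset.prod_univ_sum, ← Finset.prod_mul_distrib]

lemma Ex_one (n : ℕ) (p : ℝ) : Ex n p (fun _ => 1) = 1 := by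
  have := Ex_prod n p (fun _ _ _ => 1)
  simpa using this

lemma prod_single (n : ℕ) (e f : Fin n) (g : ℝ) :
    (∏ i, ∏ j, (if i = e ∧ j = f then g else 1)) = g := by
  rw [Finset.prod_eq_single e, Finset.prod_eq_single f]
  · simp
  · intro b _ hb; simp [hb]
  · simp
  · intro b _ hb; simp [hb]
  · simp

lemma Ex_single (n : ℕ) (p : ℝ) (e f : Fin n) (g : ℕ → ℝ) :
    Ex n p (fun a => g (a e f)) = (1 - p) * g 0 + p * g 1 := by
  have := Ex_prod n p (fun i j k => if i = e ∧ j = f then g k else 1)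
  have h1 : ∀ i j, ((1 - p) * (if i = e ∧ j = f then g 0 else 1)
      + p * (if i = e ∧ j = f then g 1 else 1)) =
      if i = e ∧ j = f then ((1 - p) * g 0 + p * g 1) else 1 := by
    intro i j; split_ifs <;> ring
  simp_rw [h1, prod_single] at this
  rw [← this]
  congr 1
  funext a
  rw [← prod_single n e f (g (a e f))]
  refine Finset.prod_congr rfl fun i _ => Finset.prod_congr rfl fun j _ => ?_
  split_ifs with h
  · rw [h.1, h.2]
  · rfl

lemma Ex_cov (n : ℕ) (p : ℝ) (e f e' f' : Fin n) :
    Ex n p (fun a => ((a e f : ℝ) - p) * ((a e' f' : ℝ) - p)) =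
      if e = e' ∧ f = f' then p * (1 - p) else 0 := by
  split_ifs with h
  · obtain ⟨rfl, rfl⟩ := h
    rw [Ex_single n p e f (fun k => ((k : ℝ) - p) * ((k : ℝ) - p))]
    push_cast; ring
  · have := Ex_prod n p (fun i j k => (if i = e ∧ j = f then (k : ℝ) - p else 1) *
      (if i = e' ∧ j = f' then (k : ℝ) - p else 1))
    simp_rw [Finset.prod_mul_distrib] at this
    have h2 : ∀ a : Fin n → Fin n → ℕ, ∀ e f : Fin n,
        (∏ i, ∏ j, (if i = e ∧ j = f then (a i j : ℝ) - p else 1)) = (a e f : ℝ) - p := by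
      intro a e f
      rw [← prod_single n e f ((a e f : ℝ) - p)]
      refine Finset.prod_congr rfl fun i _ => Finset.prod_congr rfl fun j _ => ?_
      split_ifs with h
      · rw [h.1, h.2]
      · rfl
    simp_rw [h2] at this
    rw [this]
    refine Finset.prod_eq_zero (Finset.mem_univ e) (Finset.prod_eq_zero (Finset.mem_univ f) ?_)
    simp only [if_neg h]
    simp
    ring

lemma Ex_add (n : ℕ) (p : ℝ) (F G : (Fin n → Fin n → ℕ) → ℝ) :
    Ex n p (fun a => F a + G a) = Ex n p F + Ex n p G := by
  simp [Ex, mul_add, Finset.sum_add_distrib]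

lemma Ex_sub (n : ℕ) (p : ℝ) (F G : (Fin n → Fin n → ℕ) → ℝ) :
    Ex n p (fun a => F a - G a) = Ex n p F - Ex n p G := by
  simp [Ex, mul_sub, Finset.sum_sub_distrib]

lemma Ex_mul (n : ℕ) (p c : ℝ) (F : (Fin n → Fin n → ℕ) → ℝ) :
    Ex n p (fun a => c * F a) = c * Ex n p F := by
  simp only [Ex, Finset.mul_sum]
  exact Finset.sum_congr rfl fun _ _ => by ring

lemma Ex_const (n : ℕ) (p c : ℝ) : Ex n p (fun _ => c) = c := by
  have := Ex_mul n p c (fun _ => 1)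
  simpa [Ex_one] using this

lemma Ex_sum {κ : Type*} (s : Finset κ) (n : ℕ) (p : ℝ) (F : κ → (Fin n → Fin n → ℕ) → ℝ) :
    Ex n p (fun a => ∑ k ∈ s, F k a) = ∑ k ∈ s, Ex n p (F k) := by
  simp only [Ex, Finset.mul_sum]
  exact Finset.sum_comm

lemma Ex_mono {n : ℕ} {p : ℝ} (h0 : 0 ≤ p) (h1 : p ≤ 1) {F G : (Fin n → Fin n → ℕ) → ℝ}
    (h : ∀ a ∈ arr n, F a ≤ G a) : Ex n p F ≤ Ex n p G :=
  Finset.sum_le_sum fun a ha => mul_le_mul_of_nonneg_left (h a ha) (wgt_nonneg h0 h1 a)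

lemma Ex_mean (n : ℕ) (p : ℝ) (e f : Fin n) :
    Ex n p (fun a => (a e f : ℝ)) = p := by
  rw [Ex_single n p e f (fun k => (k : ℝ))]; simp

/-- Linear functional: mean. -/
lemma Ex_lin (n : ℕ) (p c : ℝ) (z : Fin n → Fin n → ℝ) :
    Ex n p (fun a => (∑ i, ∑ j, z i j * ((a i j : ℝ) - p)) + c) = c := by
  rw [Ex_add, Ex_sum, Ex_const]
  simp_rw [Ex_sum, Ex_mul, Ex_sub, Ex_const, Ex_mean]
  simp

/-- Linear functional: second moment. -/
lemma Ex_sq (n : ℕ) (p c : ℝ) (z : Fin n → Fin n → ℝ) :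
    Ex n p (fun a => ((∑ i, ∑ j, z i j * ((a i j : ℝ) - p)) + c) ^ 2) =
      p * (1 - p) * (∑ i, ∑ j, z i j ^ 2) + c ^ 2 := by
  have h : (fun a : Fin n → Fin n → ℕ => ((∑ i, ∑ j, z i j * ((a i j : ℝ) - p)) + c) ^ 2) =
      fun a => (∑ i, ∑ j, ∑ i', ∑ j', (z i j * z i' j') * (((a i j : ℝ) - p) * ((a i' j' : ℝ) - p)))
        + (2 * c * ((∑ i, ∑ j, z i j * ((a i j : ℝ) - p)) + 0) + c ^ 2) := by
    funext a
    have : (∑ i, ∑ j, ∑ i', ∑ j', (z i j * z i' j') * (((a i j : ℝ) - p) * ((a i' j' : ℝ) - p)))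
        = (∑ i, ∑ j, z i j * ((a i j : ℝ) - p)) * (∑ i, ∑ j, z i j * ((a i j : ℝ) - p)) := by
      simp_rw [Finset.sum_mul, Finset.mul_sum]
      refine Finset.sum_congr rfl fun i _ => Finset.sum_congr rfl fun j _ =>
        Finset.sum_congr rfl fun i' _ => Finset.sum_congr rfl fun j' _ => by ring
    rw [this]; ring
  rw [h, Ex_add, Ex_add, Ex_const, Ex_mul, Ex_lin]
  simp_rw [Ex_sum, Ex_mul, Ex_cov]
  have : ∀ i j : Fin n, (∑ i', ∑ j', z i j * z i' j' * (if i = i' ∧ j = j' then p * (1 - p) else 0))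
      = p * (1 - p) * z i j ^ 2 := by
    intro i j
    rw [Finset.sum_eq_single i, Finset.sum_eq_single j]
    · simp; ring
    · intro b _ hb; simp [Ne.symm hb]
    · simp
    · intro b _ hb; simp [Ne.symm hb]
    · simp
  simp_rw [this, ← Finset.mul_sum]
  ring

end SwitchModel

namespace SwitchModel

/-- One-step operator on real functions. -/
noncomputable def Pop (n : ℕ) (p : ℝ) (sched : (Fin n → Fin n → ℕ) → (Fin n → Fin n → ℕ))
    (f : (Fin n → Fin n → ℕ) → ℝ) (q : Fin n → Fin n → ℕ) : ℝ :=
  Ex n p (fun a => f (nextQ n q a (sched q)))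

lemma jointA_eq {n : ℕ} {p : ℝ} (h0 : 0 ≤ p) (h1 : p ≤ 1) {a : Fin n → Fin n → ℕ}
    (ha : a ∈ arr n) : jointA n (fun _ _ => bern p) a = ENNReal.ofReal (wgt n p a) := by
  unfold jointA wgt
  rw [ENNReal.ofReal_prod_of_nonneg
    (fun i _ => Finset.prod_nonneg fun _ _ => bw_nonneg h0 h1 _)]
  refine Finset.prod_congr rfl fun i _ => ?_
  rw [ENNReal.ofReal_prod_of_nonneg (fun i _ => bw_nonneg h0 h1 _)]
  refine Finset.prod_congr rfl fun j _ => ?_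
  rcases mem_arr.1 ha i j with h | h <;> simp [bern, bw, h]

lemma jointA_zero {n : ℕ} {p : ℝ} {a : Fin n → Fin n → ℕ}
    (ha : a ∉ arr n) : jointA n (fun _ _ => bern p) a = 0 := by
  rw [mem_arr] at ha
  push Not at ha
  obtain ⟨i, j, h⟩ := ha
  refine Finset.prod_eq_zero (Finset.mem_univ i) (Finset.prod_eq_zero (Finset.mem_univ j) ?_)
  simp [bern, h.1, h.2]

lemma inv_ennreal {n : ℕ} {p : ℝ} (h0 : 0 ≤ p) (h1 : p ≤ 1)
    {sched : (Fin n → Fin n → ℕ) → (Fin n → Fin n → ℕ)} {pd : (Fin n → Fin n → ℕ) → ℝ≥0∞}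
    (hinv : IsInvariant n (kernelMW n (fun _ _ => bern p) sched) pd)
    (f : (Fin n → Fin n → ℕ) → ℝ≥0∞) :
    ∑' q, pd q * f q =
      ∑' q, pd q * ∑ a ∈ arr n, ENNReal.ofReal (wgt n p a) * f (nextQ n q a (sched q)) := by
  have h2 : ∀ q q', kernelMW n (fun _ _ => bern p) sched q q' =
      ∑ a ∈ arr n, ENNReal.ofReal (wgt n p a) *
        (if nextQ n q a (sched q) = q' then 1 else 0) := by
    intro q q'
    unfold kernelMW
    rw [tsum_eq_sum (s := arr n)]
    · exact Finset.sum_congr rfl fun a ha => by rw [jointA_eq h0 h1 ha]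
    · intro a ha; rw [jointA_zero ha, zero_mul]
  calc ∑' q, pd q * f q = ∑' qn, (∑' q, pd q * kernelMW n (fun _ _ => bern p) sched q qn) * f qn :=
        tsum_congr fun qn => by rw [hinv.2 qn]
    _ = ∑' qn, ∑' q, pd q * (kernelMW n (fun _ _ => bern p) sched q qn * f qn) := by
        refine tsum_congr fun qn => ?_
        rw [← ENNReal.tsum_mul_right]
        exact tsum_congr fun q => by rw [mul_assoc]
    _ = ∑' q, ∑' qn, pd q * (kernelMW n (fun _ _ => bern p) sched q qn * f qn) :=
        ENNReal.tsum_comm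
    _ = _ := by
        refine tsum_congr fun q => ?_
        rw [ENNReal.tsum_mul_left]
        congr 1
        simp_rw [h2, Finset.sum_mul]
        rw [Summable.tsum_finsetSum (fun _ _ => ENNReal.summable)]
        refine Finset.sum_congr rfl fun a _ => ?_
        rw [tsum_eq_single (nextQ n q a (sched q))]
        · simp
        · intro b hb; simp [Ne.symm hb]

lemma ofReal_Pop {n : ℕ} {p : ℝ} (h0 : 0 ≤ p) (h1 : p ≤ 1)
    {sched : (Fin n → Fin n → ℕ) → (Fin n → Fin n → ℕ)}
    {f : (Fin n → Fin n → ℕ) → ℝ} (hf : ∀ q, 0 ≤ f q) (q : Fin n → Fin n → ℕ) :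
    ENNReal.ofReal (Pop n p sched f q) =
      ∑ a ∈ arr n, ENNReal.ofReal (wgt n p a) * ENNReal.ofReal (f (nextQ n q a (sched q))) := by
  unfold Pop Ex
  rw [ENNReal.ofReal_sum_of_nonneg (fun a _ => mul_nonneg (wgt_nonneg h0 h1 a) (hf _))]
  exact Finset.sum_congr rfl fun a _ => ENNReal.ofReal_mul (wgt_nonneg h0 h1 a)

lemma Pop_nonneg {n : ℕ} {p : ℝ} (h0 : 0 ≤ p) (h1 : p ≤ 1)
    {sched : (Fin n → Fin n → ℕ) → (Fin n → Fin n → ℕ)}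
    {f : (Fin n → Fin n → ℕ) → ℝ} (hf : ∀ q, 0 ≤ f q) (q : Fin n → Fin n → ℕ) :
    0 ≤ Pop n p sched f q :=
  Finset.sum_nonneg fun a _ => mul_nonneg (wgt_nonneg h0 h1 a) (hf _)

lemma pd_ne_top {n : ℕ} {pd : (Fin n → Fin n → ℕ) → ℝ≥0∞} (h : ∑' q, pd q = 1)
    (q : Fin n → Fin n → ℕ) : pd q ≠ ⊤ :=
  ENNReal.ne_top_of_tsum_ne_top (by rw [h]; simp) q

lemma summable_iff {n : ℕ} {pd : (Fin n → Fin n → ℕ) → ℝ≥0∞} (h : ∑' q, pd q = 1)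
    {f : (Fin n → Fin n → ℕ) → ℝ} (hf : ∀ q, 0 ≤ f q) :
    Summable (fun q => (pd q).toReal * f q) ↔ ∑' q, pd q * ENNReal.ofReal (f q) ≠ ⊤ := by
  have : ∀ q, (pd q).toReal * f q = (pd q * ENNReal.ofReal (f q)).toReal := by
    intro q; rw [ENNReal.toReal_mul, ENNReal.toReal_ofReal (hf q)]
  simp_rw [this]
  constructor
  · intro hs
    have h2 := hs.tsum_ofReal_ne_top
    convert h2 using 3 with q
    rw [ENNReal.ofReal_toReal (ENNReal.mul_ne_top (pd_ne_top h q) ENNReal.ofReal_ne_top)]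
  · intro hs
    exact ENNReal.summable_toReal hs

lemma tsum_toReal {n : ℕ} {pd : (Fin n → Fin n → ℕ) → ℝ≥0∞} (h : ∑' q, pd q = 1)
    {f : (Fin n → Fin n → ℕ) → ℝ} (hf : ∀ q, 0 ≤ f q) :
    ∑' q, (pd q).toReal * f q = (∑' q, pd q * ENNReal.ofReal (f q)).toReal := by
  rw [ENNReal.tsum_toReal_eq
    (fun q => ENNReal.mul_ne_top (pd_ne_top h q) ENNReal.ofReal_ne_top)]
  exact tsum_congr fun q => by rw [ENNReal.toReal_mul, ENNReal.toReal_ofReal (hf q)]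

/-- Stationarity for nonnegative integrable functions. -/
lemma stat {n : ℕ} {p : ℝ} (h0 : 0 ≤ p) (h1 : p ≤ 1)
    {sched : (Fin n → Fin n → ℕ) → (Fin n → Fin n → ℕ)} {pd : (Fin n → Fin n → ℕ) → ℝ≥0∞}
    (hinv : IsInvariant n (kernelMW n (fun _ _ => bern p) sched) pd)
    {f : (Fin n → Fin n → ℕ) → ℝ} (hf : ∀ q, 0 ≤ f q)
    (hs : Summable (fun q => (pd q).toReal * f q)) :
    Summable (fun q => (pd q).toReal * Pop n p sched f q) ∧
      ∑' q, (pd q).toReal * Pop n p sched f q = ∑' q, (pd q).toReal * f q := by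
  have key := inv_ennreal h0 h1 hinv (fun q => ENNReal.ofReal (f q))
  simp_rw [← ofReal_Pop h0 h1 hf] at key
  have hP := Pop_nonneg h0 h1 (sched := sched) hf
  rw [summable_iff hinv.1 hP, tsum_toReal hinv.1 hP, tsum_toReal hinv.1 hf, ← key]
  exact ⟨(summable_iff hinv.1 hf).1 hs, rfl⟩

/-- Comparison (Foster–Lyapunov moment bound), without any integrability assumption. -/
lemma comparison {n : ℕ} {p : ℝ} (h0 : 0 ≤ p) (h1 : p ≤ 1)
    {sched : (Fin n → Fin n → ℕ) → (Fin n → Fin n → ℕ)} {pd : (Fin n → Fin n → ℕ) → ℝ≥0∞}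
    (hinv : IsInvariant n (kernelMW n (fun _ _ => bern p) sched) pd)
    {f g : (Fin n → Fin n → ℕ) → ℝ} (hf : ∀ q, 0 ≤ f q) (hg : ∀ q, 0 ≤ g q) {c : ℝ} (hc : 0 ≤ c)
    (h : ∀ q, Pop n p sched f q + g q ≤ f q + c) :
    Summable (fun q => (pd q).toReal * g q) ∧ ∑' q, (pd q).toReal * g q ≤ c := by
  have main : ∑' q, pd q * ENNReal.ofReal (g q) ≤ ENNReal.ofReal c := by
    have step : ∀ N : ℕ, ∑' q, pd q * (if f q ≤ N then ENNReal.ofReal (g q) else 0) ≤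
        ENNReal.ofReal c := by
      intro N
      have key := inv_ennreal h0 h1 hinv (fun q => ENNReal.ofReal (min (f q) N))
      have hmin : ∀ q, 0 ≤ min (f q) (N : ℝ) := fun q => le_min (hf q) (Nat.cast_nonneg N)
      simp_rw [← ofReal_Pop (f := fun q => min (f q) (N : ℝ)) h0 h1 hmin] at key
      have hle : ∀ q, Pop n p sched (fun q => min (f q) (N : ℝ)) q ≤
          min (Pop n p sched f q) N := by
        intro q
        refine le_min (Ex_mono h0 h1 fun a _ => min_le_left _ _) ?_
        refine (Ex_mono h0 h1 (G := fun _ => (N : ℝ)) fun a _ => min_le_right _ _).trans ?_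
        rw [Ex_const]
      have hpt : ∀ q, ENNReal.ofReal (Pop n p sched (fun q => min (f q) (N : ℝ)) q) +
          (if f q ≤ N then ENNReal.ofReal (g q) else 0) ≤
          ENNReal.ofReal (min (f q) N) + ENNReal.ofReal c := by
        intro q
        have hl := hle q
        have hp := Pop_nonneg h0 h1 (sched := sched) hmin q
        rw [← ENNReal.ofReal_add (hmin q) hc]
        split_ifs with hq
        · rw [← ENNReal.ofReal_add hp (hg q)]
          apply ENNReal.ofReal_le_ofReal
          rw [min_eq_left hq]
          have := (le_min_iff.1 hl).1
          linarith [h q]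
        · rw [add_zero]
          apply ENNReal.ofReal_le_ofReal
          rw [min_eq_right (le_of_not_ge hq)]
          have := (le_min_iff.1 hl).2
          linarith
      have hsum := ENNReal.tsum_le_tsum (fun q => mul_le_mul_right (hpt q) (pd q))
      simp_rw [mul_add] at hsum
      rw [ENNReal.tsum_add, ENNReal.tsum_add, ← key, ENNReal.tsum_mul_right, hinv.1,
        one_mul] at hsum
      refine (ENNReal.add_le_add_iff_left ?_).1 hsum
      refine ne_top_of_le_ne_top (b := (N : ℝ≥0∞)) (by simp) ?_
      calc ∑' q, pd q * ENNReal.ofReal (min (f q) N) ≤ ∑' q, pd q * (N : ℝ≥0∞) := by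
            refine ENNReal.tsum_le_tsum fun q => mul_le_mul_right ?_ _
            rw [← ENNReal.ofReal_natCast]
            exact ENNReal.ofReal_le_ofReal (min_le_right _ _)
        _ = N := by rw [ENNReal.tsum_mul_right, hinv.1, one_mul]
    have hsup : ∀ s : Finset (Fin n → Fin n → ℕ),
        ∑ q ∈ s, pd q * ENNReal.ofReal (g q) ≤ ENNReal.ofReal c := by
      intro s
      obtain ⟨N, hN⟩ : ∃ N : ℕ, ∀ q ∈ s, f q ≤ N := by
        obtain ⟨N, hN⟩ := exists_nat_ge (∑ q ∈ s, f q)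
        exact ⟨N, fun q hq => (Finset.single_le_sum (fun q _ => hf q) hq).trans hN⟩
      calc ∑ q ∈ s, pd q * ENNReal.ofReal (g q)
          = ∑ q ∈ s, pd q * (if f q ≤ N then ENNReal.ofReal (g q) else 0) :=
            Finset.sum_congr rfl fun q hq => by rw [if_pos (hN q hq)]
        _ ≤ _ := ENNReal.sum_le_tsum s
        _ ≤ _ := step N
    rw [ENNReal.tsum_eq_iSup_sum]
    exact iSup_le hsup
  refine ⟨(summable_iff hinv.1 hg).2 (ne_top_of_le_ne_top ENNReal.ofReal_ne_top main), ?_⟩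
  rw [tsum_toReal hinv.1 hg]
  exact ENNReal.toReal_le_of_le_ofReal hc main

end SwitchModel

namespace SwitchModel

/-- Inner product of matrices. -/
def ip (n : ℕ) (x y : Fin n → Fin n → ℝ) : ℝ := ∑ i, ∑ j, x i j * y i j

lemma normE_sq (n : ℕ) (x : Fin n → Fin n → ℝ) : normE n x ^ 2 = ∑ i, ∑ j, x i j ^ 2 :=
  Real.sq_sqrt (Finset.sum_nonneg fun _ _ => Finset.sum_nonneg fun _ _ => sq_nonneg _)

lemma normE_nonneg (n : ℕ) (x : Fin n → Fin n → ℝ) : 0 ≤ normE n x := Real.sqrt_nonneg _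

lemma ip_self (n : ℕ) (x : Fin n → Fin n → ℝ) : ip n x x = normE n x ^ 2 := by
  rw [normE_sq]
  exact Finset.sum_congr rfl fun _ _ => Finset.sum_congr rfl fun _ _ => by ring

lemma abs_le_normE (n : ℕ) (x : Fin n → Fin n → ℝ) (i j : Fin n) : |x i j| ≤ normE n x := by
  apply Real.abs_le_sqrt
  refine (Finset.single_le_sum (f := fun j => x i j ^ 2) (fun _ _ => sq_nonneg _)
    (Finset.mem_univ j)).trans ?_
  exact Finset.single_le_sum (f := fun i => ∑ j, x i j ^ 2)
    (fun _ _ => Finset.sum_nonneg fun _ _ => sq_nonneg _) (Finset.mem_univ i)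

lemma ip_sq_le (n : ℕ) (x y : Fin n → Fin n → ℝ) :
    ip n x y ^ 2 ≤ normE n x ^ 2 * normE n y ^ 2 := by
  rw [normE_sq, normE_sq]
  unfold ip
  simp_rw [← Fintype.sum_prod_type']
  exact Finset.sum_mul_sq_le_sq_mul_sq _ _ _

lemma abs_ip_le (n : ℕ) (x y : Fin n → Fin n → ℝ) :
    |ip n x y| ≤ normE n x * normE n y := by
  refine abs_le_of_sq_le_sq ?_ (mul_nonneg (normE_nonneg _ _) (normE_nonneg _ _))
  rw [mul_pow]
  exact ip_sq_le n x y

lemma ip_add_right (n : ℕ) (x y z : Fin n → Fin n → ℝ) :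
    ip n x (y + z) = ip n x y + ip n x z := by
  simp [ip, mul_add, Finset.sum_add_distrib]

lemma ip_sub_right (n : ℕ) (x y z : Fin n → Fin n → ℝ) :
    ip n x (y - z) = ip n x y - ip n x z := by
  simp [ip, mul_sub, Finset.sum_sub_distrib]

lemma ip_sub_left (n : ℕ) (x y z : Fin n → Fin n → ℝ) :
    ip n (x - y) z = ip n x z - ip n y z := by
  simp [ip, sub_mul, Finset.sum_sub_distrib]

lemma ip_smul_right (n : ℕ) (c : ℝ) (x y : Fin n → Fin n → ℝ) :
    ip n x (c • y) = c * ip n x y := by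
  simp only [ip, Finset.mul_sum, Pi.smul_apply, smul_eq_mul]
  exact Finset.sum_congr rfl fun _ _ => Finset.sum_congr rfl fun _ _ => by ring

lemma ip_comm (n : ℕ) (x y : Fin n → Fin n → ℝ) : ip n x y = ip n y x :=
  Finset.sum_congr rfl fun _ _ => Finset.sum_congr rfl fun _ _ => by ring

lemma normE_add_sq (n : ℕ) (x y : Fin n → Fin n → ℝ) :
    normE n (x + y) ^ 2 = normE n x ^ 2 + 2 * ip n x y + normE n y ^ 2 := by
  simp only [normE_sq, ip, Finset.mul_sum, ← Finset.sum_add_distrib, Pi.add_apply]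
  exact Finset.sum_congr rfl fun _ _ => Finset.sum_congr rfl fun _ _ => by ring

lemma normE_sub_smul_sq (n : ℕ) (c : ℝ) (x y : Fin n → Fin n → ℝ) :
    normE n (x - c • y) ^ 2 = normE n x ^ 2 - 2 * c * ip n x y + c ^ 2 * normE n y ^ 2 := by
  simp only [normE_sq, ip, Finset.mul_sum, ← Finset.sum_add_distrib, ← Finset.sum_sub_distrib,
    Pi.sub_apply, Pi.smul_apply, smul_eq_mul]
  exact Finset.sum_congr rfl fun _ _ => Finset.sum_congr rfl fun _ _ => by ring

lemma normE_mono {n : ℕ} {x y : Fin n → Fin n → ℝ} (h : ∀ i j, |x i j| ≤ |y i j|) :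
    normE n x ≤ normE n y :=
  Real.sqrt_le_sqrt (Finset.sum_le_sum fun i _ => Finset.sum_le_sum fun j _ => sq_le_sq.2 (h i j))

/-- Existence of the nearest point of the cone. -/
lemma exists_nearest (n : ℕ) (q : Fin n → Fin n → ℝ) :
    ∃ k ∈ coneK n, ∀ z ∈ coneK n, normE n (q - k) ≤ normE n (q - z) := by
  set R : ℝ := 2 * normE n q with hR
  have hR0 : 0 ≤ R := mul_nonneg (by norm_num) (normE_nonneg _ _)
  let φ : (Fin n → ℝ) × (Fin n → ℝ) → ℝ := fun v => normE n (fun i j => q i j - (v.1 i + v.2 j))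
  have hφ : Continuous φ := by
    unfold φ normE
    fun_prop
  let B : Set ((Fin n → ℝ) × (Fin n → ℝ)) :=
    Set.Icc (fun _ => 0) (fun _ => R) ×ˢ Set.Icc (fun _ => 0) (fun _ => R)
  have hB : IsCompact B := isCompact_Icc.prod isCompact_Icc
  have h0B : ((fun _ => 0, fun _ => 0) : (Fin n → ℝ) × (Fin n → ℝ)) ∈ B := by
    refine ⟨⟨le_rfl, fun _ => hR0⟩, ⟨le_rfl, fun _ => hR0⟩⟩
  obtain ⟨v, hv, hmin⟩ := hB.exists_isMinOn ⟨_, h0B⟩ hφ.continuousOn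
  refine ⟨fun i j => v.1 i + v.2 j, ⟨v.1, v.2, hv.1.1, hv.2.1, fun _ _ => rfl⟩, ?_⟩
  rintro z ⟨w, wt, hw, hwt, hz⟩
  have hval : ∀ w wt : Fin n → ℝ, (w, wt) ∈ B → φ v ≤ φ (w, wt) := fun w wt h => hmin h
  have hz' : q - z = fun i j => q i j - (w i + wt j) := by
    funext i j; simp [hz]
  rw [hz']
  change φ v ≤ φ (w, wt)
  by_cases hin : (w, wt) ∈ B
  · exact hval _ _ hin
  · have h0 : φ v ≤ normE n q := by
      have := hval _ _ h0B
      simpa [φ] using this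
    refine h0.trans ?_
    have hex : ∃ i j, R < w i + wt j := by
      by_contra hno
      push Not at hno
      apply hin
      refine ⟨⟨hw, fun i => ?_⟩, ⟨hwt, fun i => ?_⟩⟩
      · have := hno i i; have := hwt i; simp only; linarith
      · have := hno i i; have := hw i; simp only; linarith
    obtain ⟨i, j, hij⟩ := hex
    have h1 := abs_le_normE n (fun i j => q i j - (w i + wt j)) i j
    have h2 := abs_le_normE n q i j
    have h3 := neg_abs_le (q i j - (w i + wt j))
    have h4 := le_abs_self (q i j)
    change _ ≤ normE n (fun i j => q i j - (w i + wt j))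
    linarith

/-- Projection onto the cone with the Moreau properties. -/
lemma exists_proj (n : ℕ) (q : Fin n → Fin n → ℝ) :
    ∃ k ∈ coneK n, (∀ z ∈ coneK n, normE n (q - k) ≤ normE n (q - z)) ∧
      ip n (q - k) k = 0 ∧ ∀ z ∈ coneK n, ip n (q - k) z ≤ 0 := by
  obtain ⟨k, hk, hmin⟩ := exists_nearest n q
  have hadd : ∀ z ∈ coneK n, ∀ c : ℝ, 0 ≤ c → k + c • z ∈ coneK n := by
    rintro z ⟨w, wt, hw, hwt, hz⟩ c hc
    obtain ⟨w', wt', hw', hwt', hz'⟩ := hk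
    refine ⟨fun i => w' i + c * w i, fun j => wt' j + c * wt j, ?_, ?_, ?_⟩
    · intro i; exact add_nonneg (hw' i) (mul_nonneg hc (hw i))
    · intro i; exact add_nonneg (hwt' i) (mul_nonneg hc (hwt i))
    · intro i j; simp [hz, hz']; ring
  have hsub : ∀ c : ℝ, 0 ≤ c → c ≤ 1 → k + (-c) • k ∈ coneK n := by
    intro c hc hc1
    obtain ⟨w', wt', hw', hwt', hz'⟩ := hk
    refine ⟨fun i => (1 - c) * w' i, fun j => (1 - c) * wt' j, ?_, ?_, ?_⟩
    · intro i; exact mul_nonneg (by linarith) (hw' i)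
    · intro i; exact mul_nonneg (by linarith) (hwt' i)
    · intro i j; simp [hz']; ring
  have hexp : ∀ z, ∀ c : ℝ, k + c • z ∈ coneK n →
      0 ≤ - 2 * c * ip n (q - k) z + c ^ 2 * normE n z ^ 2 := by
    intro z c h
    have h1 := hmin _ h
    have h2 : q - (k + c • z) = (q - k) - c • z := by abel
    rw [h2] at h1
    have h3 := pow_le_pow_left₀ (normE_nonneg _ _) h1 2
    rw [normE_sub_smul_sq] at h3
    linarith
  have hpos : ∀ z ∈ coneK n, ip n (q - k) z ≤ 0 := by
    intro z hz
    by_contra hcon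
    push Not at hcon
    set A := ip n (q - k) z
    set Z := normE n z ^ 2
    have hZ : 0 ≤ Z := sq_nonneg _
    have hc : 0 < A / (Z + 1) := by positivity
    have h1 := hexp z _ (hadd z hz (A / (Z + 1)) hc.le)
    have h2 : - 2 * (A / (Z + 1)) * A + (A / (Z + 1)) ^ 2 * Z =
      (A / (Z + 1)) * (A * (Z / (Z + 1) - 2)) := by field_simp; ring
    change 0 ≤ - 2 * (A / (Z + 1)) * A + (A / (Z + 1)) ^ 2 * Z at h1
    rw [h2] at h1
    have h3 : Z / (Z + 1) ≤ 1 := by rw [div_le_one (by linarith)]; linarith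
    have h4 : A * (Z / (Z + 1) - 2) < 0 := mul_neg_of_pos_of_neg hcon (by linarith)
    have := mul_neg_of_pos_of_neg hc h4
    linarith
  refine ⟨k, hk, hmin, le_antisymm (hpos k hk) ?_, hpos⟩
  by_contra hcon
  push Not at hcon
  set A := ip n (q - k) k with hA
  set Z := normE n k ^ 2 with hZd
  have hZ : 0 ≤ Z := sq_nonneg _
  set c : ℝ := (-A) / (Z - A + 1) with hcd
  have hden : 0 < Z - A + 1 := by linarith
  have hc : 0 < c := div_pos (by linarith) hden
  have hc1 : c ≤ 1 := by rw [hcd, div_le_one hden]; linarith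
  have h1 := hexp k (-c) (hsub c hc.le hc1)
  have hcZ : c * Z ≤ -A := by
    rw [hcd, div_mul_eq_mul_div, div_le_iff₀ hden]
    nlinarith
  have : c * (2 * A + c * Z) < 0 := mul_neg_of_pos_of_neg hc (by linarith)
  nlinarith

/-- MaxWeight dominates all doubly stochastic matrices. -/
lemma mw_ds {n : ℕ} {sched : (Fin n → Fin n → ℕ) → (Fin n → Fin n → ℕ)}
    (hmw : IsMaxWeight n sched) (q : Fin n → Fin n → ℕ) (M : Fin n → Fin n → ℝ)
    (hM : ∀ i j, 0 ≤ M i j) (hr : ∀ i, ∑ j, M i j = 1) (hcol : ∀ j, ∑ i, M i j = 1) :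
    ip n (toR n q) M ≤ ip n (toR n q) (toR n (sched q)) := by
  have hmem : (Matrix.of M) ∈ doublyStochastic ℝ (Fin n) := by
    rw [mem_doublyStochastic_iff_sum]
    exact ⟨hM, hr, hcol⟩
  have hmem2 : (Matrix.of M) ∈ (doublyStochastic ℝ (Fin n) : Set (Matrix (Fin n) (Fin n) ℝ)) := hmem
  rw [doublyStochastic_eq_convexHull_permMatrix] at hmem2
  have hconv : Convex ℝ {A : Matrix (Fin n) (Fin n) ℝ | ip n (toR n q) (fun i j => A i j) ≤
      ip n (toR n q) (toR n (sched q))} := by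
    refine convex_halfSpace_le (f := fun A : Matrix (Fin n) (Fin n) ℝ =>
      ip n (toR n q) (fun i j => A i j)) ?_ _
    exact ⟨fun x y => ip_add_right n _ _ _, fun c x => ip_smul_right n c _ _⟩
  refine convexHull_min ?_ hconv hmem2
  rintro A ⟨σ, rfl⟩
  change ip n (toR n q) (fun i j => σ.permMatrix ℝ i j) ≤ ip n (toR n q) (toR n (sched q))
  have h := (hmw q).2 (fun i j => if σ i = j then 1 else 0) (by
    refine ⟨fun i j => by dsimp only; split_ifs <;> simp, fun i => by simp, fun j => ?_⟩
    have : ∀ i, (if σ i = j then 1 else 0) = if i = σ.symm j then 1 else 0 := by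
      intro i; simp [Equiv.eq_symm_apply]
    simp [this])
  have h' : ((∑ i, ∑ j, q i j * (if σ i = j then 1 else 0) : ℕ) : ℝ) ≤
      ((∑ i, ∑ j, q i j * sched q i j : ℕ) : ℝ) := by exact_mod_cast h
  push_cast at h'
  unfold ip toR
  convert h' using 5
  simp [Equiv.Perm.permMatrix, PEquiv.toMatrix_apply, eq_comm]

/-- MaxWeight dominates all doubly substochastic matrices. -/
lemma mw_sub {n : ℕ} {sched : (Fin n → Fin n → ℕ) → (Fin n → Fin n → ℕ)}
    (hmw : IsMaxWeight n sched) (q : Fin n → Fin n → ℕ) (M : Fin n → Fin n → ℝ)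
    (hM : ∀ i j, 0 ≤ M i j) (hr : ∀ i, ∑ j, M i j ≤ 1) (hcol : ∀ j, ∑ i, M i j ≤ 1) :
    ip n (toR n q) M ≤ ip n (toR n q) (toR n (sched q)) := by
  set r : Fin n → ℝ := fun i => 1 - ∑ j, M i j with hrd
  set d : Fin n → ℝ := fun j => 1 - ∑ i, M i j with hdd
  have hr0 : ∀ i, 0 ≤ r i := fun i => by simp only [hrd]; linarith [hr i]
  have hd0 : ∀ i, 0 ≤ d i := fun i => by simp only [hdd]; linarith [hcol i]
  have hsum : ∑ i, r i = ∑ j, d j := by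
    simp only [hrd, hdd, Finset.sum_sub_distrib]
    rw [Finset.sum_comm]
  have hR0 : 0 ≤ ∑ i, r i := Finset.sum_nonneg fun i _ => hr0 i
  rcases hR0.eq_or_lt with h | h
  · have h1 := (Finset.sum_eq_zero_iff_of_nonneg (fun i _ => hr0 i)).1 h.symm
    have h2 := (Finset.sum_eq_zero_iff_of_nonneg (fun i _ => hd0 i)).1 (hsum ▸ h.symm)
    refine mw_ds hmw q M hM (fun i => ?_) (fun i => ?_)
    · have := h1 i (Finset.mem_univ i); simp only [hrd] at this; linarith
    · have := h2 i (Finset.mem_univ i); simp only [hdd] at this; linarith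
  · set R := ∑ i, r i with hRd
    have h3 := mw_ds hmw q (fun i j => M i j + r i * d j / R)
      (fun i j => add_nonneg (hM i j) (div_nonneg (mul_nonneg (hr0 i) (hd0 j)) hR0))
      (fun i => by
        rw [Finset.sum_add_distrib, ← Finset.sum_div, ← Finset.mul_sum, ← hsum,
          mul_div_assoc, div_self h.ne']
        simp [hrd])
      (fun j => by
        rw [Finset.sum_add_distrib, ← Finset.sum_div, ← Finset.sum_mul, ← hRd,
          mul_comm R, mul_div_assoc, div_self h.ne']
        simp [hdd])
    refine le_trans ?_ h3
    refine Finset.sum_le_sum fun i _ => Finset.sum_le_sum fun j _ => ?_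
    refine mul_le_mul_of_nonneg_left ?_ (by simp [toR])
    have := div_nonneg (mul_nonneg (hr0 i) (hd0 j)) hR0
    linarith

end SwitchModel

namespace SwitchModel

/-- Constant matrix. -/
def cst (n : ℕ) (p : ℝ) : Fin n → Fin n → ℝ := fun _ _ => p

lemma ip_cone_ds {n : ℕ} {k M : Fin n → Fin n → ℝ} {w wt : Fin n → ℝ}
    (hk : ∀ i j, k i j = w i + wt j)
    (hr : ∀ i, ∑ j, M i j = 1) (hcol : ∀ j, ∑ i, M i j = 1) :
    ip n k M = ∑ i, w i + ∑ j, wt j := by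
  unfold ip
  simp_rw [hk, add_mul, Finset.sum_add_distrib]
  congr 1
  · simp_rw [← Finset.mul_sum, hr, mul_one]
  · rw [Finset.sum_comm]
    simp_rw [← Finset.mul_sum, hcol, mul_one]

lemma perm_row {n : ℕ} {s : Fin n → Fin n → ℕ} (hs : IsPerm n s) (i : Fin n) :
    ∑ j, toR n s i j = 1 := by
  have := hs.2.1 i
  unfold toR
  exact_mod_cast this

lemma perm_col {n : ℕ} {s : Fin n → Fin n → ℕ} (hs : IsPerm n s) (j : Fin n) :
    ∑ i, toR n s i j = 1 := by
  have := hs.2.2 j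
  unfold toR
  exact_mod_cast this

lemma normE_one (n : ℕ) : normE n (cst n 1) = n := by
  unfold normE cst
  simp only [one_pow, Finset.sum_const, Finset.card_univ, Fintype.card_fin, nsmul_eq_mul, mul_one]
  exact Real.sqrt_mul_self (Nat.cast_nonneg n)

lemma ip_cst (n : ℕ) (y : Fin n → Fin n → ℝ) (p : ℝ) :
    ip n y (cst n p) = p * ip n y (cst n 1) := by
  rw [← ip_smul_right]
  congr 1
  funext i j
  simp [cst]

/-- Drift towards the cone. -/
lemma drift_cone {n : ℕ} (hn : 1 ≤ n) {ε : ℝ} (hε0 : 0 ≤ ε) (hε : ε ≤ 1 / (2 * n))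
    {sched : (Fin n → Fin n → ℕ) → (Fin n → Fin n → ℕ)}
    (hmw : IsMaxWeight n sched) (q : Fin n → Fin n → ℕ) {k : Fin n → Fin n → ℝ}
    (hk : k ∈ coneK n) (hort : ip n (toR n q - k) k = 0)
    (hpol : ∀ z ∈ coneK n, ip n (toR n q - k) z ≤ 0) :
    ip n (toR n q - k) (cst n ((1 - ε) / n) - toR n (sched q)) ≤
      -(1 / (2 * n)) * normE n (toR n q - k) := by
  have hn0 : (0 : ℝ) < n := by exact_mod_cast hn
  set y := toR n q - k with hy
  set x := normE n y with hx
  have hx0 : 0 ≤ x := normE_nonneg _ _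
  rcases hx0.eq_or_lt with h | hxpos
  · have h1 := abs_ip_le n y (cst n ((1 - ε) / n) - toR n (sched q))
    rw [← hx, ← h, zero_mul] at h1
    rw [← h, mul_zero]
    exact (le_abs_self _).trans h1
  · have hrow : ∀ i, ∑ j, y i j ≤ 0 := by
      intro i
      have h1 := hpol (fun i' _ => if i' = i then 1 else 0)
        ⟨fun i' => if i' = i then 1 else 0, fun _ => 0, fun i' => by dsimp only; split_ifs <;> simp,
          fun _ => le_rfl, fun i' j => by simp⟩
      have h2 : ip n y (fun i' _ => if i' = i then 1 else 0) = ∑ j, y i j := by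
        unfold ip; simp
      rwa [h2] at h1
    have hcol : ∀ j, ∑ i, y i j ≤ 0 := by
      intro j
      have h1 := hpol (fun _ j' => if j' = j then 1 else 0)
        ⟨fun _ => 0, fun i' => if i' = j then 1 else 0, fun _ => le_rfl,
          fun i' => by dsimp only; split_ifs <;> simp, fun i' j => by simp⟩
      have h2 : ip n y (fun _ j' => if j' = j then 1 else 0) = ∑ i, y i j := by
        unfold ip; simp
      rwa [h2] at h1
    have hd : 0 < 1 / (n * x) := by positivity
    have hM := mw_sub hmw q (cst n (1 / n) + (1 / (n * x)) • y)
      (fun i j => by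
        simp only [cst, Pi.add_apply, Pi.smul_apply, smul_eq_mul]
        have h1 := abs_le_normE n y i j
        have h2 := neg_abs_le (y i j)
        have h3 : 1 / (n : ℝ) + 1 / (n * x) * y i j = (1 / (n * x)) * (x + y i j) := by
          field_simp
        rw [h3]
        exact mul_nonneg hd.le (by linarith))
      (fun i => by
        simp only [cst, Pi.add_apply, Pi.smul_apply, smul_eq_mul, Finset.sum_add_distrib,
          ← Finset.mul_sum, Finset.sum_const, Finset.card_univ, Fintype.card_fin, nsmul_eq_mul]
        have := mul_nonpos_of_nonneg_of_nonpos hd.le (hrow i)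
        have h3 : (n : ℝ) * (1 / n) = 1 := by field_simp
        linarith)
      (fun i => by
        simp only [cst, Pi.add_apply, Pi.smul_apply, smul_eq_mul, Finset.sum_add_distrib,
          ← Finset.mul_sum, Finset.sum_const, Finset.card_univ, Fintype.card_fin, nsmul_eq_mul]
        have := mul_nonpos_of_nonneg_of_nonpos hd.le (hcol i)
        have h3 : (n : ℝ) * (1 / n) = 1 := by field_simp
        linarith)
    obtain ⟨w, wt, hw, hwt, hkw⟩ := hk
    have hks := ip_cone_ds hkw (perm_row (hmw q).1) (perm_col (hmw q).1)
    have hkν : ip n k (cst n (1 / n)) = ∑ i, w i + ∑ j, wt j := by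
      refine ip_cone_ds hkw ?_ ?_ <;>
      · intro i
        simp only [cst, Finset.sum_const, Finset.card_univ, Fintype.card_fin, nsmul_eq_mul]
        field_simp
    have hqy : ip n (toR n q) y = x ^ 2 := by
      have h1 : ip n y y = ip n (toR n q) y - ip n k y := ip_sub_left _ _ _ _
      rw [ip_comm n k y, hort, ip_self] at h1
      linarith
    rw [ip_add_right, ip_smul_right, hqy] at hM
    have h4 : 1 / (n * x) * x ^ 2 = x / n := by field_simp
    rw [h4] at hM
    have h5 : ip n y (toR n (sched q)) = ip n (toR n q) (toR n (sched q)) - ip n k (toR n (sched q)) :=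
      ip_sub_left _ _ _ _
    have h6 : ip n y (cst n (1 / n)) = ip n (toR n q) (cst n (1 / n)) - ip n k (cst n (1 / n)) :=
      ip_sub_left _ _ _ _
    have h7 : ip n y (cst n ((1 - ε) / n)) = ip n y (cst n (1 / n)) - (ε / n) * ip n y (cst n 1) := by
      rw [ip_cst n y ((1 - ε) / n), ip_cst n y (1 / n)]; ring
    have h8 := abs_ip_le n y (cst n 1)
    rw [normE_one, ← hx] at h8
    have h9 : -(ε / n) * ip n y (cst n 1) ≤ ε * x := by
      have : (ε / n) * (-ip n y (cst n 1)) ≤ (ε / n) * (x * n) :=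
        mul_le_mul_of_nonneg_left ((neg_le_abs _).trans h8) (by positivity)
      have h10 : (ε / n) * (x * n) = ε * x := by field_simp
      linarith
    have h11 : ε * x ≤ 1 / (2 * n) * x := mul_le_mul_of_nonneg_right hε hx0
    have h12 : x / n = 2 * (1 / (2 * n) * x) := by field_simp
    rw [ip_sub_right, h7, h5]
    linarith

lemma normE_le_tot (n : ℕ) (q : Fin n → Fin n → ℕ) : normE n (toR n q) ≤ ip n (toR n q) (cst n 1) := by
  have h0 : ∀ i j, 0 ≤ toR n q i j := fun i j => by simp [toR]
  have hT : ip n (toR n q) (cst n 1) = ∑ i, ∑ j, toR n q i j := by simp [ip, cst]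
  rw [hT]
  unfold normE
  rw [Real.sqrt_le_left (Finset.sum_nonneg fun _ _ => Finset.sum_nonneg fun _ _ => h0 _ _)]
  simp_rw [← Fintype.sum_prod_type']
  rw [sq, Finset.sum_mul]
  refine Finset.sum_le_sum fun a _ => ?_
  rw [sq]
  exact mul_le_mul_of_nonneg_left (Finset.single_le_sum
    (f := fun a : Fin n × Fin n => toR n q a.1 a.2) (fun _ _ => h0 _ _) (Finset.mem_univ a)) (h0 _ _)

/-- Drift towards the origin. -/
lemma drift_zero {n : ℕ} (hn : 1 ≤ n) {ε : ℝ} (hε0 : 0 ≤ ε)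
    {sched : (Fin n → Fin n → ℕ) → (Fin n → Fin n → ℕ)}
    (hmw : IsMaxWeight n sched) (q : Fin n → Fin n → ℕ) :
    ip n (toR n q) (cst n ((1 - ε) / n) - toR n (sched q)) ≤ -(ε / n) * normE n (toR n q) := by
  have hn0 : (0 : ℝ) < n := by exact_mod_cast hn
  have h1 := mw_ds hmw q (cst n (1 / n)) (fun _ _ => by simp [cst])
    (fun i => by
      simp only [cst, Finset.sum_const, Finset.card_univ, Fintype.card_fin, nsmul_eq_mul]
      field_simp)
    (fun i => by
      simp only [cst, Finset.sum_const, Finset.card_univ, Fintype.card_fin, nsmul_eq_mul]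
      field_simp)
  have h7 : ip n (toR n q) (cst n ((1 - ε) / n)) =
      ip n (toR n q) (cst n (1 / n)) - (ε / n) * ip n (toR n q) (cst n 1) := by
    rw [ip_cst n _ ((1 - ε) / n), ip_cst n _ (1 / n)]; ring
  have h8 := mul_le_mul_of_nonneg_left (normE_le_tot n q) (div_nonneg hε0 hn0.le)
  rw [ip_sub_right, h7]
  linarith

lemma ip_one (n : ℕ) (y : Fin n → Fin n → ℝ) : ip n y (cst n 1) = ∑ i, ∑ j, y i j := by
  simp [ip, cst]

/-- Fourth moment drift. -/
lemma fourth {n : ℕ} (hn : 1 ≤ n) {p δ : ℝ} (h0 : 0 ≤ p) (h1 : p * n ≤ 1)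
    {s : Fin n → Fin n → ℕ} (hs : IsPerm n s) (y : Fin n → Fin n → ℝ)
    (hd : ip n y (cst n p - toR n s) ≤ -δ * normE n y) :
    Ex n p (fun a => normE n (y + (toR n a - toR n s)) ^ 4) ≤
      normE n y ^ 4 - 4 * δ * normE n y ^ 3 + 20 * n * normE n y ^ 2 + 12 * n ^ 2 := by
  have hn1 : (1 : ℝ) ≤ n := by exact_mod_cast hn
  have hp1 : p ≤ 1 := by nlinarith
  set x := normE n y with hx
  have hx0 : 0 ≤ x := normE_nonneg _ _
  set μ := ip n y (cst n p - toR n s) with hμ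
  let A : (Fin n → Fin n → ℕ) → ℝ := fun a =>
    (∑ i, ∑ j, (fun _ _ => (1 : ℝ)) i j * ((a i j : ℝ) - p)) + (n : ℝ) ^ 2 * p
  let L : (Fin n → Fin n → ℕ) → ℝ := fun a => (∑ i, ∑ j, y i j * ((a i j : ℝ) - p)) + μ
  have hA : ∀ a, A a = ∑ i, ∑ j, (a i j : ℝ) := by
    intro a
    simp only [A, one_mul, Finset.sum_sub_distrib, Finset.sum_const, Finset.card_univ,
      Fintype.card_fin, nsmul_eq_mul]
    ring
  have hL : ∀ a, L a = ip n y (toR n a - toR n s) := by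
    intro a
    simp only [L, hμ, ip, ← Finset.sum_add_distrib, toR, cst, Pi.sub_apply]
    refine Finset.sum_congr rfl fun _ _ => Finset.sum_congr rfl fun _ _ => by ring
  have hEA : Ex n p A = (n : ℝ) ^ 2 * p := Ex_lin _ _ _ _
  have hEL : Ex n p L = μ := Ex_lin _ _ _ _
  have hEA2 : Ex n p (fun a => A a ^ 2) = p * (1 - p) * (n : ℝ) ^ 2 + ((n : ℝ) ^ 2 * p) ^ 2 := by
    rw [Ex_sq n p ((n : ℝ) ^ 2 * p) (fun _ _ => 1)]
    simp only [one_pow, Finset.sum_const, Finset.card_univ, Fintype.card_fin, nsmul_eq_mul]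
    ring
  have hpt : ∀ a ∈ arr n, normE n (y + (toR n a - toR n s)) ^ 4 ≤
      (x ^ 4 + 10 * n * x ^ 2 + 4 * n ^ 2) + (4 * x ^ 2 * L a + (10 * x ^ 2 * A a + 4 * A a ^ 2)) := by
    intro a ha
    have hB : normE n (toR n a - toR n s) ^ 2 ≤ A a + n := by
      have hsn : (n : ℝ) = ∑ i, ∑ j, toR n s i j := by
        simp_rw [perm_row hs]; simp
      rw [normE_sq, hA, hsn, ← Finset.sum_add_distrib]
      refine Finset.sum_le_sum fun i _ => ?_
      rw [← Finset.sum_add_distrib]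
      refine Finset.sum_le_sum fun j _ => ?_
      have hsij := hs.1 i j
      have hsij' : s i j = 0 ∨ s i j = 1 := by omega
      rcases mem_arr.1 ha i j with h | h <;> rcases hsij' with h' | h' <;> simp [toR, h, h']
    set b := toR n a - toR n s with hb
    have h4 : normE n (y + b) ^ 4 = (x ^ 2 + 2 * L a + normE n b ^ 2) ^ 2 := by
      rw [hL a, ← normE_add_sq]; ring
    have h5 := ip_sq_le n y b
    rw [← hL a, ← hx] at h5
    have hB0 : 0 ≤ normE n b ^ 2 := sq_nonneg _
    set B := normE n b ^ 2
    rw [h4]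
    have h6 : (x ^ 2 + 2 * L a + B) ^ 2 ≤ x ^ 4 + 4 * x ^ 2 * L a + 10 * (x ^ 2 * B) + 2 * B ^ 2 := by
      nlinarith [sq_nonneg (2 * L a - B)]
    have h7 : x ^ 2 * B ≤ x ^ 2 * (A a + n) := mul_le_mul_of_nonneg_left hB (sq_nonneg _)
    have h8 : B ^ 2 ≤ (A a + n) ^ 2 := pow_le_pow_left₀ hB0 hB 2
    nlinarith [sq_nonneg (A a - n)]
  refine (Ex_mono h0 hp1 hpt).trans ?_
  rw [Ex_add, Ex_const, Ex_add, Ex_mul, hEL, Ex_add, Ex_mul, hEA, Ex_mul, hEA2]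
  have h9 : (n : ℝ) ^ 2 * p ≤ n := by nlinarith
  have h10 : 0 ≤ (n : ℝ) ^ 2 * p := by positivity
  have h11 : p * (1 - p) * (n : ℝ) ^ 2 ≤ n := by nlinarith [mul_nonneg h10 h0]
  have h12 : ((n : ℝ) ^ 2 * p) ^ 2 ≤ n ^ 2 := pow_le_pow_left₀ h10 h9 2
  have h13 : x ^ 2 * μ ≤ x ^ 2 * (-δ * x) := mul_le_mul_of_nonneg_left hd (sq_nonneg _)
  have h14 : x ^ 2 * ((n : ℝ) ^ 2 * p) ≤ x ^ 2 * n := mul_le_mul_of_nonneg_left h9 (sq_nonneg _)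
  nlinarith

/-- Nearest point of the cone to a state. -/
noncomputable def kp (n : ℕ) (q : Fin n → Fin n → ℕ) : Fin n → Fin n → ℝ :=
  Classical.choose (exists_proj n (toR n q))

lemma kp_spec (n : ℕ) (q : Fin n → Fin n → ℕ) : kp n q ∈ coneK n ∧
    (∀ z ∈ coneK n, normE n (toR n q - kp n q) ≤ normE n (toR n q - z)) ∧
      ip n (toR n q - kp n q) (kp n q) = 0 ∧ ∀ z ∈ coneK n, ip n (toR n q - kp n q) z ≤ 0 :=
  Classical.choose_spec (exists_proj n (toR n q))

/-- Distance to the cone. -/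
noncomputable def X (n : ℕ) (q : Fin n → Fin n → ℕ) : ℝ := normE n (toR n q - kp n q)

lemma X_nonneg (n : ℕ) (q : Fin n → Fin n → ℕ) : 0 ≤ X n q := normE_nonneg _ _

lemma next_norm {n : ℕ} (q a s : Fin n → Fin n → ℕ) {k : Fin n → Fin n → ℝ} (hk : ∀ i j, 0 ≤ k i j) :
    normE n (toR n (nextQ n q a s) - k) ≤ normE n ((toR n q - k) + (toR n a - toR n s)) := by
  apply normE_mono
  intro i j
  simp only [toR, nextQ, Pi.sub_apply, Pi.add_apply]
  have hk := hk i j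
  rcases le_total (s i j) (q i j + a i j) with h | h
  · rw [Nat.cast_sub h]
    push_cast
    apply le_of_eq
    congr 1
    ring
  · rw [Nat.sub_eq_zero_of_le h]
    have h' : (q i j : ℝ) + a i j ≤ s i j := by exact_mod_cast h
    rw [Nat.cast_zero, abs_of_nonpos (by linarith), abs_of_nonpos (by linarith)]
    linarith

lemma cone_nonneg {n : ℕ} {k : Fin n → Fin n → ℝ} (hk : k ∈ coneK n) (i j : Fin n) : 0 ≤ k i j := by
  obtain ⟨w, wt, hw, hwt, h⟩ := hk
  rw [h]; exact add_nonneg (hw i) (hwt j)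

lemma X_next {n : ℕ} (q a s : Fin n → Fin n → ℕ) :
    X n (nextQ n q a s) ≤ normE n ((toR n q - kp n q) + (toR n a - toR n s)) :=
  ((kp_spec n (nextQ n q a s)).2.1 _ (kp_spec n q).1).trans
    (next_norm q a s (cone_nonneg (kp_spec n q).1))

/-- State space collapse: third moment. -/
lemma X3_bound {n : ℕ} (hn : 1 ≤ n) {ε : ℝ} (hε0 : 0 ≤ ε) (hε : ε ≤ 1 / (2 * n))
    {sched : (Fin n → Fin n → ℕ) → (Fin n → Fin n → ℕ)} {pd : (Fin n → Fin n → ℕ) → ℝ≥0∞}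
    (hmw : IsMaxWeight n sched)
    (hinv : IsInvariant n (kernelMW n (fun _ _ => bern ((1 - ε) / n)) sched) pd) :
    Summable (fun q => (pd q).toReal * X n q ^ 3) ∧
      ∑' q, (pd q).toReal * X n q ^ 3 ≤ 8012 * n ^ 6 := by
  have hn1 : (1 : ℝ) ≤ n := by exact_mod_cast hn
  have hn0 : (0 : ℝ) < n := by linarith
  have hε1 : ε ≤ 1 := by
    refine hε.trans ?_
    rw [div_le_one (by linarith)]; linarith
  have hp0 : 0 ≤ (1 - ε) / n := div_nonneg (by linarith) hn0.le
  have hpn : (1 - ε) / n * n ≤ 1 := by rw [div_mul_cancel₀ _ hn0.ne']; linarith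
  have hp1 : (1 - ε) / n ≤ 1 := by rw [div_le_one hn0]; linarith
  have key := comparison hp0 hp1 hinv (f := fun q => X n q ^ 4) (g := fun q => (1 / n) * X n q ^ 3)
    (c := 8012 * n ^ 5) (fun q => by positivity)
    (fun q => mul_nonneg (by positivity) (pow_nonneg (X_nonneg _ _) 3)) (by positivity) (by
      intro q
      have hk := kp_spec n q
      have hd := drift_cone hn hε0 hε hmw q hk.1 hk.2.2.1 hk.2.2.2
      have h4 := fourth hn hp0 hpn (hmw q).1 _ hd
      have h5 : Pop n ((1 - ε) / n) sched (fun q => X n q ^ 4) q ≤ _ :=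
        (Ex_mono hp0 hp1 fun a _ => pow_le_pow_left₀ (X_nonneg _ _) (X_next q a (sched q)) 4).trans h4
      refine (add_le_add_left h5 _).trans ?_
      change X n q ^ 4 - _ * X n q ^ 3 + _ * X n q ^ 2 + _ + _ ≤ _
      have hx := X_nonneg n q
      set x := X n q
      have e1 : 4 * (1 / (2 * (n : ℝ))) * x ^ 3 = 2 * (1 / n * x ^ 3) := by field_simp; norm_num
      have e2 : 20 * n * x ^ 2 ≤ 1 / n * x ^ 3 + 8000 * n ^ 5 := by
        have e3 : 20 * n ^ 2 * x ^ 2 ≤ x ^ 3 + 8000 * (n : ℝ) ^ 6 := by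
          set m : ℝ := n ^ 2
          have hm : 0 ≤ m := by positivity
          have : 8000 * (n : ℝ) ^ 6 = 8000 * m ^ 3 := by simp only [m]; ring
          rw [this]
          rcases le_total x (20 * m) with h | h
          · have := pow_le_pow_left₀ hx h 2
            have h2 := mul_le_mul_of_nonneg_left this hm
            have : 0 ≤ x ^ 3 := by positivity
            nlinarith
          · have := mul_le_mul_of_nonneg_right h (sq_nonneg x)
            have : 0 ≤ m ^ 3 := by positivity
            nlinarith
        have e4 : 20 * n * x ^ 2 = (20 * n ^ 2 * x ^ 2) / n := by field_simp
        have e5 : 1 / n * x ^ 3 + 8000 * (n : ℝ) ^ 5 = (x ^ 3 + 8000 * n ^ 6) / n := by field_simp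
        rw [e4, e5]
        exact div_le_div_of_nonneg_right e3 hn0.le
      have e6 : (n : ℝ) ^ 2 ≤ n ^ 5 := pow_le_pow_right₀ hn1 (by norm_num)
      rw [e1]
      linarith)
  have hcomm : ∀ q, (pd q).toReal * (1 / n * X n q ^ 3) = (1 / n) * ((pd q).toReal * X n q ^ 3) := by
    intro q; ring
  simp_rw [hcomm] at key
  rw [tsum_mul_left] at key
  refine ⟨(summable_mul_left_iff (by positivity)).1 key.1, ?_⟩
  have := key.2
  rw [one_div, inv_mul_le_iff₀ hn0] at this
  refine this.trans (le_of_eq ?_)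
  ring

/-- Finiteness of the third moment of the queue. -/
lemma norm3 {n : ℕ} (hn : 1 ≤ n) {ε : ℝ} (hε0 : 0 < ε) (hε1 : ε ≤ 1)
    {sched : (Fin n → Fin n → ℕ) → (Fin n → Fin n → ℕ)} {pd : (Fin n → Fin n → ℕ) → ℝ≥0∞}
    (hmw : IsMaxWeight n sched)
    (hinv : IsInvariant n (kernelMW n (fun _ _ => bern ((1 - ε) / n)) sched) pd) :
    Summable (fun q => (pd q).toReal * normE n (toR n q) ^ 3) := by
  have hn1 : (1 : ℝ) ≤ n := by exact_mod_cast hn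
  have hn0 : (0 : ℝ) < n := by linarith
  have hp0 : 0 ≤ (1 - ε) / n := div_nonneg (by linarith) hn0.le
  have hpn : (1 - ε) / n * n ≤ 1 := by rw [div_mul_cancel₀ _ hn0.ne']; linarith
  have hp1 : (1 - ε) / n ≤ 1 := by rw [div_le_one hn0]; linarith
  set d := ε / n with hd
  have hd0 : 0 < d := by positivity
  have hN0 : ∀ q, 0 ≤ normE n (toR n q) := fun q => normE_nonneg _ _
  have key := comparison hp0 hp1 hinv (f := fun q => normE n (toR n q) ^ 4)
    (g := fun q => d * normE n (toR n q) ^ 3)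
    (c := 20 * n * (20 * n / d) ^ 2 + 12 * n ^ 2) (fun q => by positivity)
    (fun q => mul_nonneg (by positivity) (pow_nonneg (hN0 _) 3)) (by positivity) (by
      intro q
      have h4 := fourth hn hp0 hpn (hmw q).1 _ (drift_zero hn hε0.le hmw q)
      have h5 : Pop n ((1 - ε) / n) sched (fun q => normE n (toR n q) ^ 4) q ≤ _ :=
        (Ex_mono hp0 hp1 fun a _ => pow_le_pow_left₀ (hN0 _)
          (by simpa using next_norm (k := 0) q a (sched q) (fun _ _ => le_rfl)) 4).trans h4
      refine (add_le_add_left h5 _).trans ?_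
      have hx := hN0 q
      set x := normE n (toR n q)
      rw [← hd]
      have hx3 : 0 ≤ d * x ^ 3 := by positivity
      have : 20 * n * x ^ 2 ≤ d * x ^ 3 + 20 * n * (20 * n / d) ^ 2 := by
        rcases le_total x (20 * n / d) with h | h
        · have := mul_le_mul_of_nonneg_left (pow_le_pow_left₀ hx h 2) (by positivity : 0 ≤ 20 * (n : ℝ))
          linarith
        · rw [div_le_iff₀ hd0] at h
          have := mul_le_mul_of_nonneg_right h (sq_nonneg x)
          have : 0 ≤ 20 * n * (20 * n / d) ^ 2 := by positivity
          nlinarith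
      linarith)
  have hcomm : ∀ q, (pd q).toReal * (d * normE n (toR n q) ^ 3) =
      d * ((pd q).toReal * normE n (toR n q) ^ 3) := by
    intro q; ring
  simp_rw [hcomm] at key
  exact (summable_mul_left_iff hd0.ne').1 key.1

end SwitchModel

namespace SwitchModel

/-- Total of a matrix. -/
def tot (n : ℕ) (z : Fin n → Fin n → ℝ) : ℝ := ∑ i, ∑ j, z i j

/-- The bilinear form `n ⟨z_∥, v_∥⟩`. -/
noncomputable def Qb (n : ℕ) (z v : Fin n → Fin n → ℝ) : ℝ :=
  (∑ i, (∑ j, z i j) * (∑ j, v i j)) + (∑ j, (∑ i, z i j) * (∑ i, v i j)) - tot n z * tot n v / n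

lemma Qb_add_left (n : ℕ) (x y v : Fin n → Fin n → ℝ) : Qb n (x + y) v = Qb n x v + Qb n y v := by
  simp only [Qb, tot, Pi.add_apply, Finset.sum_add_distrib, add_mul, add_div]
  ring

lemma Qb_comm (n : ℕ) (x y : Fin n → Fin n → ℝ) : Qb n x y = Qb n y x := by
  simp only [Qb, mul_comm]

lemma tot_sq_le_row (n : ℕ) (z : Fin n → Fin n → ℝ) : tot n z ^ 2 ≤ n * ∑ i, (∑ j, z i j) ^ 2 := by
  have := sq_sum_le_card_mul_sum_sq (s := Finset.univ) (f := fun i => ∑ j, z i j)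
  simpa [tot] using this

lemma row_sq_le (n : ℕ) (z : Fin n → Fin n → ℝ) : ∑ i, (∑ j, z i j) ^ 2 ≤ n * normE n z ^ 2 := by
  rw [normE_sq, Finset.mul_sum]
  refine Finset.sum_le_sum fun i _ => ?_
  have := sq_sum_le_card_mul_sum_sq (s := Finset.univ) (f := fun j => z i j)
  simpa using this

lemma col_sq_le (n : ℕ) (z : Fin n → Fin n → ℝ) : ∑ j, (∑ i, z i j) ^ 2 ≤ n * normE n z ^ 2 := by
  rw [normE_sq, Finset.sum_comm, Finset.mul_sum]
  refine Finset.sum_le_sum fun i _ => ?_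
  have := sq_sum_le_card_mul_sum_sq (s := Finset.univ) (f := fun j => z j i)
  simpa using this

lemma abs_tot_le (n : ℕ) (z : Fin n → Fin n → ℝ) : |tot n z| ≤ n * normE n z := by
  refine abs_le_of_sq_le_sq ?_ (mul_nonneg (Nat.cast_nonneg _) (normE_nonneg _ _))
  have h1 := tot_sq_le_row n z
  have h2 := mul_le_mul_of_nonneg_left (row_sq_le n z) (Nat.cast_nonneg (α := ℝ) n)
  nlinarith

lemma Qb_self_nonneg {n : ℕ} (hn : 1 ≤ n) (z : Fin n → Fin n → ℝ) : 0 ≤ Qb n z z := by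
  have hn0 : (0 : ℝ) < n := by exact_mod_cast hn
  have h1 := tot_sq_le_row n z
  have h2 : tot n z * tot n z / n ≤ ∑ i, (∑ j, z i j) ^ 2 := by
    rw [div_le_iff₀ hn0]; nlinarith
  have h3 : 0 ≤ ∑ j, (∑ i, z i j) * (∑ i, z i j) :=
    Finset.sum_nonneg fun _ _ => mul_self_nonneg _
  simp only [pow_two] at h2
  unfold Qb
  linarith

lemma Qb_self_le (n : ℕ) (z : Fin n → Fin n → ℝ) : Qb n z z ≤ 2 * n * normE n z ^ 2 := by
  have h1 := row_sq_le n z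
  have h2 := col_sq_le n z
  have h3 : 0 ≤ tot n z * tot n z / n := div_nonneg (mul_self_nonneg _) (Nat.cast_nonneg _)
  unfold Qb
  simp only [pow_two (∑ _, _)] at h1 h2
  linarith

lemma abs_Qb_le {n : ℕ} (hn : 1 ≤ n) (z v : Fin n → Fin n → ℝ) :
    |Qb n z v| ≤ 3 * n * (normE n z * normE n v) := by
  have hn0 : (0 : ℝ) < n := by exact_mod_cast hn
  have hz := normE_nonneg n z
  have hv := normE_nonneg n v
  have h1 : |∑ i, (∑ j, z i j) * (∑ j, v i j)| ≤ n * (normE n z * normE n v) := by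
    refine abs_le_of_sq_le_sq ?_ (by positivity)
    refine (Finset.sum_mul_sq_le_sq_mul_sq _ _ _).trans ?_
    refine (mul_le_mul (row_sq_le n z) (row_sq_le n v) (Finset.sum_nonneg fun _ _ => sq_nonneg _)
      (by positivity)).trans (le_of_eq (by ring))
  have h2 : |∑ j, (∑ i, z i j) * (∑ i, v i j)| ≤ n * (normE n z * normE n v) := by
    refine abs_le_of_sq_le_sq ?_ (by positivity)
    refine (Finset.sum_mul_sq_le_sq_mul_sq _ _ _).trans ?_
    refine (mul_le_mul (col_sq_le n z) (col_sq_le n v) (Finset.sum_nonneg fun _ _ => sq_nonneg _)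
      (by positivity)).trans (le_of_eq (by ring))
  have h3 : |tot n z * tot n v / n| ≤ n * (normE n z * normE n v) := by
    rw [abs_div, abs_mul, Nat.abs_cast, div_le_iff₀ hn0]
    refine (mul_le_mul (abs_tot_le n z) (abs_tot_le n v) (abs_nonneg _)
      (by positivity)).trans (le_of_eq (by ring))
  unfold Qb
  rw [abs_le] at h1 h2 h3 ⊢
  constructor <;> linarith [h1.1, h1.2, h2.1, h2.2, h3.1, h3.2]

lemma Qb_cone {n : ℕ} (hn : 1 ≤ n) {k : Fin n → Fin n → ℝ} (hk : k ∈ coneK n)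
    (u : Fin n → Fin n → ℝ) : Qb n k u = n * ip n k u := by
  have hn0 : (n : ℝ) ≠ 0 := by positivity
  obtain ⟨w, wt, -, -, h⟩ := hk
  have hc : tot n u = ∑ j, ∑ i, u i j := Finset.sum_comm
  have e1 : ip n k u = (∑ i, w i * ∑ j, u i j) + ∑ j, wt j * ∑ i, u i j := by
    simp only [ip, h, add_mul, Finset.sum_add_distrib, Finset.mul_sum]
    congr 1
    exact Finset.sum_comm
  have e2 : (∑ i, (∑ j, k i j) * (∑ j, u i j)) =
      n * (∑ i, w i * ∑ j, u i j) + (∑ j, wt j) * tot n u := by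
    simp only [h, Finset.sum_add_distrib, Finset.sum_const, Finset.card_univ, Fintype.card_fin,
      nsmul_eq_mul, add_mul, tot, ← Finset.mul_sum, mul_assoc]
  have e3 : (∑ j, (∑ i, k i j) * (∑ i, u i j)) =
      n * (∑ j, wt j * ∑ i, u i j) + (∑ j, w j) * tot n u := by
    rw [hc]
    simp only [h, Finset.sum_add_distrib, Finset.sum_const, Finset.card_univ, Fintype.card_fin,
      nsmul_eq_mul, add_mul, ← Finset.mul_sum, mul_assoc]
    ring
  have e4 : tot n k = n * (∑ i, w i) + n * (∑ j, wt j) := by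
    simp only [tot, h, Finset.sum_add_distrib, Finset.sum_const, Finset.card_univ, Fintype.card_fin,
      nsmul_eq_mul, ← Finset.mul_sum]
  unfold Qb
  rw [e1, e2, e3, e4]
  field_simp
  ring

lemma young {x v m : ℝ} (hx : 0 ≤ x) (hm : 0 < m) (hv : 0 ≤ v) {U : ℕ} (hU : v ^ 2 = U) :
    x * v ≤ x ^ 3 / m ^ 2 + m * U := by
  have hx3 : 0 ≤ x ^ 3 / m ^ 2 := by positivity
  have hmU : 0 ≤ m * (U : ℝ) := by positivity
  rcases le_total x (m * v) with h | h
  · have := mul_le_mul_of_nonneg_right h hv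
    rw [← hU]
    nlinarith
  · rcases Nat.eq_zero_or_pos U with h0 | h0
    · rw [h0] at hU
      have : v = 0 := by simpa using hU
      rw [this, mul_zero]
      linarith
    · have h1 : (1 : ℝ) ≤ U := by exact_mod_cast h0
      have hv1 : 1 ≤ v := by nlinarith
      have h2 : (m * v) ^ 2 ≤ x ^ 2 := pow_le_pow_left₀ (by positivity) h 2
      have h3 : x * v ≤ x ^ 3 / m ^ 2 := by
        rw [le_div_iff₀ (by positivity)]
        have h4 : v * m ^ 2 ≤ x ^ 2 := by
          refine le_trans ?_ h2
          nlinarith [sq_nonneg m]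
        nlinarith [mul_le_mul_of_nonneg_left h4 hx]
      linarith

lemma Q_next {n : ℕ} (hn : 1 ≤ n) {m : ℝ} (hm : 0 < m) {q a s : Fin n → Fin n → ℕ}
    (hs : IsPerm n s) :
    |Qb n (toR n (nextQ n q a s)) (toR n (nextQ n q a s)) -
        Qb n (toR n q + (toR n a - toR n s)) (toR n q + (toR n a - toR n s))| ≤
      8 * n / m ^ 2 * X n (nextQ n q a s) ^ 3 + (8 * n * m + 2 * n) *
        (tot n (toR n (nextQ n q a s)) - tot n (toR n q) - tot n (toR n a) + n) := by
  have hn0 : (0 : ℝ) < n := by exact_mod_cast hn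
  set q' := nextQ n q a s with hq'
  set uN : Fin n → Fin n → ℕ := fun i j => s i j - (q i j + a i j) with huN
  set u := toR n uN with hu
  set b := toR n q + (toR n a - toR n s) with hb
  have hdec : toR n q' = b + u := by
    funext i j
    simp only [hb, hu, huN, toR, hq', nextQ, Pi.add_apply, Pi.sub_apply]
    have : ((q i j + a i j - s i j : ℕ) : ℝ) + s i j =
        q i j + a i j + ((s i j - (q i j + a i j) : ℕ) : ℝ) := by
      norm_cast; omega
    linarith
  have hdec' : b = toR n q' + (-1 : ℝ) • u := by rw [hdec]; simp
  have hU : normE n u ^ 2 = ((∑ i, ∑ j, uN i j : ℕ) : ℝ) := by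
    rw [normE_sq]
    push_cast
    refine Finset.sum_congr rfl fun i _ => Finset.sum_congr rfl fun j _ => ?_
    have h1 := hs.1 i j
    have h2 : uN i j = 0 ∨ uN i j = 1 := by simp only [huN]; omega
    rcases h2 with h | h <;> simp [hu, toR, h]
  have hort : ip n (toR n q') u = 0 := by
    refine Finset.sum_eq_zero fun i _ => Finset.sum_eq_zero fun j _ => ?_
    simp only [hu, huN, toR, hq', nextQ]
    norm_cast
    rcases le_total (s i j) (q i j + a i j) with h | h
    · rw [Nat.sub_eq_zero_of_le h, mul_zero]
    · rw [Nat.sub_eq_zero_of_le h, zero_mul]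
  have htot : tot n (toR n q') - tot n (toR n q) - tot n (toR n a) + n =
      ((∑ i, ∑ j, uN i j : ℕ) : ℝ) := by
    have hsn : (n : ℝ) = ∑ i, ∑ j, toR n s i j := by
      simp_rw [perm_row hs]; simp
    rw [hdec]
    rw [hsn]
    push_cast
    simp only [tot, ← Finset.sum_add_distrib, ← Finset.sum_sub_distrib]
    refine Finset.sum_congr rfl fun i _ => Finset.sum_congr rfl fun j _ => ?_
    simp only [hb, hu, toR, Pi.add_apply, Pi.sub_apply]
    ring
  rw [htot]
  set U := ∑ i, ∑ j, uN i j
  set v := normE n u with hv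
  have hv0 : 0 ≤ v := normE_nonneg _ _
  set y := toR n q' - kp n q' with hy
  have hX : X n q' = normE n y := rfl
  have hX0 := X_nonneg n q'
  have hk := (kp_spec n q').1
  -- the cross term
  have hcross : Qb n (toR n q') u = Qb n y u - n * ip n y u := by
    have h1 : toR n q' = y + kp n q' := by rw [hy]; abel
    have h2 : ip n y u = ip n (toR n q') u - ip n (kp n q') u := ip_sub_left _ _ _ _
    have h3 : Qb n (toR n q') u = Qb n y u + Qb n (kp n q') u := by
      conv_lhs => rw [h1]
      exact Qb_add_left _ _ _ _
    rw [h3, Qb_cone hn hk, h2, hort]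
    ring
  have hc1 := abs_Qb_le hn y u
  have hc2 := abs_ip_le n y u
  have hyo := young hX0 hm hv0 hU
  rw [hX, ← hv] at *
  have hexp : Qb n (toR n q') (toR n q') - Qb n b b = 2 * Qb n (toR n q') u - Qb n u u := by
    have h1 : Qb n (toR n q') (toR n q') = Qb n b (toR n q') + Qb n u (toR n q') := by
      conv_lhs => rw [hdec, Qb_add_left, ← hdec]
    have h2 : Qb n (toR n q') b = Qb n b b + Qb n u b := by
      conv_lhs => rw [hdec, Qb_add_left]
    have h3 : Qb n (toR n q') u = Qb n b u + Qb n u u := by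
      conv_lhs => rw [hdec, Qb_add_left]
    rw [Qb_comm n b (toR n q'), Qb_comm n u (toR n q')] at h1
    rw [Qb_comm n u b] at h2
    linarith
  have hu0 := Qb_self_nonneg hn u
  have hu1 := Qb_self_le n u
  change Qb n u u ≤ 2 * n * v ^ 2 at hu1
  rw [hU] at hu1
  rw [hexp, hcross]
  have hc2' : |n * ip n y u| ≤ n * (normE n y * v) := by
    rw [abs_mul, Nat.abs_cast]
    exact mul_le_mul_of_nonneg_left hc2 hn0.le
  have hyo' := mul_le_mul_of_nonneg_left hyo hn0.le
  have e1 : 8 * n / m ^ 2 * normE n y ^ 3 + (8 * n * m + 2 * n) * (U : ℝ) =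
      8 * (n * (normE n y ^ 3 / m ^ 2 + m * U)) + 2 * n * U := by ring
  rw [e1]
  rw [abs_le] at hc1 hc2' ⊢
  constructor <;> linarith [hc1.1, hc1.2, hc2'.1, hc2'.2]

lemma Ex_Q {n : ℕ} (hn : 1 ≤ n) (ε : ℝ) {q s : Fin n → Fin n → ℕ} (hs : IsPerm n s) :
    Ex n ((1 - ε) / n) (fun a => Qb n (toR n q + (toR n a - toR n s))
      (toR n q + (toR n a - toR n s))) =
      Qb n (toR n q) (toR n q) - 2 * ε * tot n (toR n q) +
        ((2 * n ^ 2 - n) * ((1 - ε) / n * (1 - (1 - ε) / n)) + n * ε ^ 2) := by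
  have hn0 : (n : ℝ) ≠ 0 := by positivity
  set p := (1 - ε) / n with hp
  have hnp : n * p = 1 - ε := by rw [hp]; field_simp
  let r : Fin n → ℝ := fun i => ∑ j, toR n q i j
  let d : Fin n → ℝ := fun j => ∑ i, toR n q i j
  let T := tot n (toR n q)
  have hrT : ∑ i, r i = T := rfl
  have hdT : ∑ i, d i = T := Finset.sum_comm
  have hrow : ∀ (a : Fin n → Fin n → ℕ) i, (∑ j, (toR n q + (toR n a - toR n s)) i j) =
      (∑ i', ∑ j', (fun i' _ => if i' = i then (1 : ℝ) else 0) i' j' * ((a i' j' : ℝ) - p)) +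
        (r i - ε) := by
    intro a i
    simp only [Pi.add_apply, Pi.sub_apply, Finset.sum_add_distrib, Finset.sum_sub_distrib,
      perm_row hs, ite_mul, one_mul, zero_mul]
    simp only [Finset.sum_ite_irrel, Finset.sum_const_zero, Finset.sum_ite_eq', Finset.mem_univ,
      if_true, Finset.sum_sub_distrib, Finset.sum_const, Finset.card_univ, Fintype.card_fin,
      nsmul_eq_mul, hnp, r, toR]
    ring
  have hcol : ∀ (a : Fin n → Fin n → ℕ) j, (∑ i, (toR n q + (toR n a - toR n s)) i j) =
      (∑ i', ∑ j', (fun _ j' => if j' = j then (1 : ℝ) else 0) i' j' * ((a i' j' : ℝ) - p)) +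
        (d j - ε) := by
    intro a j
    simp only [Pi.add_apply, Pi.sub_apply, Finset.sum_add_distrib, Finset.sum_sub_distrib,
      perm_col hs, ite_mul, one_mul, zero_mul]
    simp only [Finset.sum_ite_eq', Finset.mem_univ,
      if_true, Finset.sum_sub_distrib, Finset.sum_const, Finset.card_univ, Fintype.card_fin,
      nsmul_eq_mul, hnp, d, toR]
    ring
  have htot : ∀ (a : Fin n → Fin n → ℕ), tot n (toR n q + (toR n a - toR n s)) =
      (∑ i', ∑ j', (fun _ _ => (1 : ℝ)) i' j' * ((a i' j' : ℝ) - p)) + (T - n * ε) := by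
    intro a
    simp only [tot, T, Pi.add_apply, Pi.sub_apply, Finset.sum_add_distrib, Finset.sum_sub_distrib,
      perm_row hs, one_mul, Finset.sum_const, Finset.card_univ, Fintype.card_fin,
      nsmul_eq_mul, hnp]
    simp only [toR]
    ring
  have hfun : (fun a : Fin n → Fin n → ℕ => Qb n (toR n q + (toR n a - toR n s))
      (toR n q + (toR n a - toR n s))) = fun a =>
      ((∑ i, ((∑ i', ∑ j', (fun i' _ => if i' = i then (1 : ℝ) else 0) i' j' * ((a i' j' : ℝ) - p)) +
        (r i - ε)) ^ 2) +
      (∑ j, ((∑ i', ∑ j', (fun _ j' => if j' = j then (1 : ℝ) else 0) i' j' * ((a i' j' : ℝ) - p)) +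
        (d j - ε)) ^ 2)) -
      (1 / n) * ((∑ i', ∑ j', (fun _ _ => (1 : ℝ)) i' j' * ((a i' j' : ℝ) - p)) + (T - n * ε)) ^ 2 := by
    funext a
    unfold Qb
    simp_rw [← hrow a, ← hcol a, ← htot a, pow_two]
    ring
  rw [hfun, Ex_sub, Ex_add, Ex_mul, Ex_sq, Ex_sum, Ex_sum]
  have e1 : ∀ i : Fin n, Ex n p (fun a => ((∑ i', ∑ j', (fun i' _ => if i' = i then (1 : ℝ) else 0) i' j' *
      ((a i' j' : ℝ) - p)) + (r i - ε)) ^ 2) = p * (1 - p) * n + (r i - ε) ^ 2 := by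
    intro i
    rw [Ex_sq]
    simp
  have e2 : ∀ j : Fin n, Ex n p (fun a => ((∑ i', ∑ j', (fun _ j' => if j' = j then (1 : ℝ) else 0) i' j' *
      ((a i' j' : ℝ) - p)) + (d j - ε)) ^ 2) = p * (1 - p) * n + (d j - ε) ^ 2 := by
    intro i
    rw [Ex_sq]
    simp
  simp_rw [e1, e2]
  have e3 : ∀ f : Fin n → ℝ, ∑ i, f i = T → ∑ i, (p * (1 - p) * n + (f i - ε) ^ 2) =
      n * (p * (1 - p) * n) + (∑ i, f i * f i) - 2 * ε * T + n * ε ^ 2 := by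
    intro f hf
    have : ∀ i, p * (1 - p) * n + (f i - ε) ^ 2 =
      (p * (1 - p) * n + ε ^ 2) + f i * f i - (2 * ε) * f i := fun i => by ring
    simp_rw [this, Finset.sum_sub_distrib, Finset.sum_add_distrib, ← Finset.mul_sum, hf]
    simp only [Finset.sum_const, Finset.card_univ, Fintype.card_fin, nsmul_eq_mul]
    ring
  rw [e3 r hrT, e3 d hdT]
  have e4 : Qb n (toR n q) (toR n q) = (∑ i, r i * r i) + (∑ i, d i * d i) - T * T / n := rfl
  rw [e4]
  change _ = _ - 2 * ε * T + _
  simp only [one_pow, Finset.sum_const, Finset.card_univ, Fintype.card_fin, nsmul_eq_mul]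
  field_simp
  ring

lemma Pop_tot {n : ℕ} (hn : 1 ≤ n) (ε : ℝ) {sched : (Fin n → Fin n → ℕ) → (Fin n → Fin n → ℕ)}
    (q : Fin n → Fin n → ℕ) :
    Ex n ((1 - ε) / n) (fun a => tot n (toR n (nextQ n q a (sched q))) - tot n (toR n q)
      - tot n (toR n a) + n) =
    Pop n ((1 - ε) / n) sched (fun q => tot n (toR n q)) q - tot n (toR n q) + n * ε := by
  have hn0 : (n : ℝ) ≠ 0 := by positivity
  rw [Ex_add, Ex_sub, Ex_sub, Ex_const, Ex_const]
  have : Ex n ((1 - ε) / n) (fun a => tot n (toR n a)) = n * (1 - ε) := by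
    simp only [tot, toR]
    simp_rw [Ex_sum, Ex_mean]
    simp only [Finset.sum_const, Finset.card_univ, Fintype.card_fin, nsmul_eq_mul]
    field_simp
  rw [this]
  unfold Pop
  ring

/-- Pointwise drift identity with error. -/
lemma Q_drift {n : ℕ} (hn : 1 ≤ n) {ε m : ℝ} (hm : 0 < m) (hε0 : 0 ≤ ε) (hε1 : ε ≤ 1)
    {sched : (Fin n → Fin n → ℕ) → (Fin n → Fin n → ℕ)}
    (hmw : IsMaxWeight n sched) (q : Fin n → Fin n → ℕ) :
    |Pop n ((1 - ε) / n) sched (fun q => Qb n (toR n q) (toR n q)) q -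
      (Qb n (toR n q) (toR n q) - 2 * ε * tot n (toR n q) +
        ((2 * n ^ 2 - n) * ((1 - ε) / n * (1 - (1 - ε) / n)) + n * ε ^ 2))| ≤
      8 * n / m ^ 2 * Pop n ((1 - ε) / n) sched (fun q => X n q ^ 3) q +
      (8 * n * m + 2 * n) *
        (Pop n ((1 - ε) / n) sched (fun q => tot n (toR n q)) q - tot n (toR n q) + n * ε) := by
  have hn1 : (1 : ℝ) ≤ n := by exact_mod_cast hn
  have hn0 : (0 : ℝ) < n := by linarith
  have hp0 : 0 ≤ (1 - ε) / n := div_nonneg (by linarith) hn0.le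
  have hp1 : (1 - ε) / n ≤ 1 := by rw [div_le_one hn0]; linarith
  rw [← Ex_Q hn ε (hmw q).1, ← Pop_tot hn ε q]
  unfold Pop
  rw [← Ex_sub, ← Ex_mul, ← Ex_mul, ← Ex_add, abs_le, neg_eq_neg_one_mul, ← Ex_mul]
  constructor
  · refine Ex_mono hp0 hp1 fun a _ => ?_
    have := (abs_le.1 (Q_next hn hm (q := q) (a := a) (hmw q).1)).1
    linarith
  · refine Ex_mono hp0 hp1 fun a _ => ?_
    exact (abs_le.1 (Q_next hn hm (q := q) (a := a) (hmw q).1)).2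

/-- Main estimate for fixed `n`. -/
lemma main_bound {n : ℕ} (hn : 1 ≤ n) {ε m : ℝ} (hm : 0 < m) (hε0 : 0 < ε) (hε : ε ≤ 1 / (2 * n))
    {sched : (Fin n → Fin n → ℕ) → (Fin n → Fin n → ℕ)} {pd : (Fin n → Fin n → ℕ) → ℝ≥0∞}
    (hmw : IsMaxWeight n sched)
    (hinv : IsInvariant n (kernelMW n (fun _ _ => bern ((1 - ε) / n)) sched) pd) :
    Etot n pd ≠ ⊤ ∧
    |2 * ε * (Etot n pd).toReal -
        ((2 * n ^ 2 - n) * ((1 - ε) / n * (1 - (1 - ε) / n)) + n * ε ^ 2)| ≤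
      8 * n / m ^ 2 * (8012 * n ^ 6) + (8 * n * m + 2 * n) * (n * ε) := by
  have hn1 : (1 : ℝ) ≤ n := by exact_mod_cast hn
  have hn0 : (0 : ℝ) < n := by linarith
  have hε1 : ε ≤ 1 := by
    refine hε.trans ?_
    rw [div_le_one (by linarith)]; linarith
  have hp0 : 0 ≤ (1 - ε) / n := div_nonneg (by linarith) hn0.le
  have hp1 : (1 - ε) / n ≤ 1 := by rw [div_le_one hn0]; linarith
  set B := ((2 * n ^ 2 - n) * ((1 - ε) / n * (1 - (1 - ε) / n)) + n * ε ^ 2) with hB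
  have hs3 := norm3 hn hε0 hε1 hmw hinv
  have hX3 := X3_bound hn hε0.le hε hmw hinv
  have hone : Summable (fun q => (pd q).toReal) :=
    ENNReal.summable_toReal (by rw [hinv.1]; simp)
  have hone1 : ∑' q, (pd q).toReal = 1 := by
    rw [← ENNReal.tsum_toReal_eq (fun q => pd_ne_top hinv.1 q), hinv.1]; simp
  have hdom : Summable (fun q => (pd q).toReal * (2 * n * (1 + normE n (toR n q) ^ 3))) := by
    have := (hone.add hs3).mul_left (2 * (n : ℝ))
    refine this.congr fun q => by ring
  have hT0 : ∀ q : Fin n → Fin n → ℕ, 0 ≤ tot n (toR n q) := fun q =>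
    Finset.sum_nonneg fun _ _ => Finset.sum_nonneg fun _ _ => Nat.cast_nonneg _
  have hpow : ∀ q : Fin n → Fin n → ℕ, normE n (toR n q) ≤ 1 + normE n (toR n q) ^ 3 ∧
      normE n (toR n q) ^ 2 ≤ 1 + normE n (toR n q) ^ 3 := by
    intro q
    have hx := normE_nonneg n (toR n q)
    set x := normE n (toR n q)
    have hx2 := pow_nonneg hx 2
    have hx3 := pow_nonneg hx 3
    rcases le_total x 1 with h | h
    · constructor <;> nlinarith
    · constructor <;> nlinarith
  have hsT : Summable (fun q => (pd q).toReal * tot n (toR n q)) := by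
    refine Summable.of_nonneg_of_le (fun q => mul_nonneg ENNReal.toReal_nonneg (hT0 q))
      (fun q => mul_le_mul_of_nonneg_left ?_ ENNReal.toReal_nonneg) hdom
    have h1 := (le_abs_self _).trans (abs_tot_le n (toR n q))
    have h2 := mul_le_mul_of_nonneg_left (hpow q).1 hn0.le
    have h3 : 0 ≤ n * (1 + normE n (toR n q) ^ 3) :=
      le_trans (mul_nonneg hn0.le (normE_nonneg _ _)) h2
    linarith
  have hsQ : Summable (fun q => (pd q).toReal * Qb n (toR n q) (toR n q)) := by
    refine Summable.of_nonneg_of_le (fun q => mul_nonneg ENNReal.toReal_nonneg (Qb_self_nonneg hn _))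
      (fun q => mul_le_mul_of_nonneg_left ?_ ENNReal.toReal_nonneg) hdom
    refine (Qb_self_le n _).trans ?_
    exact mul_le_mul_of_nonneg_left (hpow q).2 (by positivity)
  have stT := stat hp0 hp1 hinv hT0 hsT
  have stQ := stat hp0 hp1 hinv (f := fun q => Qb n (toR n q) (toR n q))
    (fun q => Qb_self_nonneg hn _) hsQ
  have stX := stat hp0 hp1 hinv (f := fun q => X n q ^ 3) (fun q => pow_nonneg (X_nonneg _ _) 3) hX3.1
  have hEt : Etot n pd = ∑' q, pd q * ENNReal.ofReal (tot n (toR n q)) := by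
    unfold Etot
    refine tsum_congr fun q => ?_
    congr 1
    unfold tot toR
    rw [ENNReal.ofReal_sum_of_nonneg (fun _ _ => Finset.sum_nonneg fun _ _ => Nat.cast_nonneg _)]
    refine Finset.sum_congr rfl fun i _ => ?_
    rw [ENNReal.ofReal_sum_of_nonneg (fun _ _ => Nat.cast_nonneg _)]
    exact Finset.sum_congr rfl fun j _ => by rw [ENNReal.ofReal_natCast]
  refine ⟨by rw [hEt]; exact (summable_iff hinv.1 hT0).1 hsT, ?_⟩
  rw [hEt, ← tsum_toReal hinv.1 hT0]
  set ET := ∑' q, (pd q).toReal * tot n (toR n q)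
  set EQ := ∑' q, (pd q).toReal * Qb n (toR n q) (toR n q)
  set EX := ∑' q, (pd q).toReal * X n q ^ 3
  -- expectation of the left side
  have hL : HasSum (fun q => (pd q).toReal *
      (Pop n ((1 - ε) / n) sched (fun q => Qb n (toR n q) (toR n q)) q -
      (Qb n (toR n q) (toR n q) - 2 * ε * tot n (toR n q) + B))) (EQ - (EQ - 2 * ε * ET + 1 * B)) := by
    have h1 := stQ.1.hasSum
    rw [stQ.2] at h1
    have h4 := hone.hasSum
    rw [hone1] at h4
    have := h1.sub ((hsQ.hasSum.sub (hsT.hasSum.mul_left (2 * ε))).add (h4.mul_right B))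
    refine this.congr_fun fun q => ?_
    ring
  have hR : HasSum (fun q => (pd q).toReal *
      (8 * n / m ^ 2 * Pop n ((1 - ε) / n) sched (fun q => X n q ^ 3) q +
      (8 * n * m + 2 * n) *
        (Pop n ((1 - ε) / n) sched (fun q => tot n (toR n q)) q - tot n (toR n q) + n * ε)))
      (8 * n / m ^ 2 * EX + (8 * n * m + 2 * n) * (ET - ET + 1 * (n * ε))) := by
    have h1 := stX.1.hasSum
    rw [stX.2] at h1
    have h2 := stT.1.hasSum
    rw [stT.2] at h2
    have h4 := hone.hasSum
    rw [hone1] at h4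
    have := (h1.mul_left (8 * n / m ^ 2)).add
      (((h2.sub hsT.hasSum).add (h4.mul_right (n * ε))).mul_left (8 * n * m + 2 * n))
    refine this.congr_fun fun q => ?_
    ring
  have hup := hasSum_le (fun q => mul_le_mul_of_nonneg_left
    (abs_le.1 (Q_drift hn hm hε0.le hε1 hmw q)).2 (ENNReal.toReal_nonneg (a := pd q))) hL hR
  have hlo := hasSum_le (fun q => by
    have := mul_le_mul_of_nonneg_left
      (abs_le.1 (Q_drift hn hm hε0.le hε1 hmw q)).1 (ENNReal.toReal_nonneg (a := pd q))
    rwa [mul_neg] at this) hR.neg hL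
  have h8 : 8 * n / m ^ 2 * EX ≤ 8 * n / m ^ 2 * (8012 * n ^ 6) :=
    mul_le_mul_of_nonneg_left hX3.2 (by positivity)
  rw [abs_le]
  constructor <;> linarith

end SwitchModel

namespace SwitchModel

lemma final_alg {N x γ c C E ε P m : ℝ} (hN : 1 ≤ N) (hx : 0 < x) (hx1 : x ≤ 1) (hc : 0 < c)
    (hcγ : c ≤ γ) (hγC : γ ≤ C) (hε : ε = γ * x ^ 2 / N ^ 4) (hεN : ε ≤ 1 / (2 * N))
    (hP : P = N ^ 5 / x ^ 2) (hm : m = N ^ 3 / x)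
    (h : |2 * ε * E - ((2 * N ^ 2 - N) * ((1 - ε) / N * (1 - (1 - ε) / N)) + N * ε ^ 2)| ≤
      8 * N / m ^ 2 * (8012 * N ^ 6) + (8 * N * m + 2 * N) * (N * ε)) :
    |(E - P / γ) / P| ≤ (1 / (2 * c)) * (5 / N + 64096 * x + 10 * C * x) := by
  have hN0 : 0 < N := by linarith
  have hγ0 : 0 < γ := by linarith
  have hP0 : 0 < P := by rw [hP]; positivity
  have hm0 : 0 < m := by rw [hm]; positivity
  have hε0 : 0 < ε := by rw [hε]; positivity
  have h2N : 1 / (2 * N) ≤ 1 := by rw [div_le_one (by positivity)]; linarith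
  have hε1 : ε ≤ 1 := by linarith
  set p := (1 - ε) / N with hp
  have hpN : p * N = 1 - ε := by rw [hp]; field_simp
  have hp0 : 0 ≤ p := div_nonneg (by linarith) hN0.le
  have hpi : p ≤ 1 / N := by rw [hp]; gcongr; linarith
  have hNi : 1 / N ≤ 1 := by rw [div_le_one hN0]; exact hN
  have hεi : ε ≤ 1 / N / 2 := by
    have : 1 / (2 * N) = 1 / N / 2 := by field_simp
    linarith
  have e1 : 2 * ε * E = N * (2 * γ * (E / P)) := by
    rw [hε, hP]; field_simp
  have e2 : (2 * N ^ 2 - N) * (p * (1 - p)) + N * ε ^ 2 =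
      N * ((2 * (1 - ε) - p) * (1 - p) + ε ^ 2) := by
    have : (2 * N ^ 2 - N) * (p * (1 - p)) = N * ((2 * (p * N) - p) * (1 - p)) := by ring
    rw [this, hpN]; ring
  have e3 : 8 * N / m ^ 2 * (8012 * N ^ 6) = N * (64096 * x ^ 2) := by
    rw [hm]; field_simp; norm_num
  have e4 : (8 * N * m + 2 * N) * (N * ε) = N * (8 * γ * x + 2 * γ * x ^ 2 / N ^ 3) := by
    rw [hm, hε]; field_simp
  rw [e1, e2, e3, e4, ← mul_sub, ← mul_add, abs_mul, abs_of_pos hN0] at h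
  have h := le_of_mul_le_mul_left h hN0
  have h5 : 2 * γ * x ^ 2 / N ^ 3 ≤ 2 * γ * x := by
    rw [div_le_iff₀ (by positivity)]
    have : 1 ≤ N ^ 3 := one_le_pow₀ hN
    have hxx : x ^ 2 ≤ x := by nlinarith
    have : x ^ 2 ≤ x * N ^ 3 := by nlinarith
    nlinarith
  have h6 : |(2 * (1 - ε) - p) * (1 - p) + ε ^ 2 - 2| ≤ 5 * (1 / N) := by
    have i1 : 0 ≤ p * ε := mul_nonneg hp0 hε0.le
    have i2 : p * ε ≤ p := mul_le_of_le_one_right hp0 hε1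
    have i3 : p * p ≤ p := mul_le_of_le_one_right hp0 (hpi.trans hNi)
    have i4 : ε * ε ≤ ε := mul_le_of_le_one_right hε0.le hε1
    have i5 := mul_self_nonneg p
    have i6 := mul_self_nonneg ε
    have e : (2 * (1 - ε) - p) * (1 - p) + ε ^ 2 - 2 =
        -2 * ε - 3 * p + 2 * (p * ε) + p * p + ε * ε := by ring
    rw [e, abs_le]
    constructor <;> linarith
  have hxx : x ^ 2 ≤ x := by nlinarith
  have e7 : 2 * γ * ((E - P / γ) / P) = 2 * γ * (E / P) - 2 := by field_simp
  have h8 : |2 * γ * ((E - P / γ) / P)| ≤ 5 / N + 64096 * x + 10 * C * x := by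
    rw [e7]
    have t := abs_add_le (2 * γ * (E / P) - ((2 * (1 - ε) - p) * (1 - p) + ε ^ 2))
      ((2 * (1 - ε) - p) * (1 - p) + ε ^ 2 - 2)
    rw [sub_add_sub_cancel] at t
    have : γ * x ≤ C * x := by gcongr
    have e : 5 / N = 5 * (1 / N) := by ring
    rw [e]
    linarith
  rw [abs_mul, abs_of_pos (by positivity : 0 < 2 * γ)] at h8
  rw [one_div, inv_mul_eq_div, le_div_iff₀ (by positivity)]
  have := mul_le_mul_of_nonneg_right hcγ (abs_nonneg ((E - P / γ) / P))
  linarith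

lemma final_bound {β : ℝ} (hβ : 4 < β) {n : ℕ} (hn : 1 ≤ n) {γ c C : ℝ} (hc : 0 < c)
    (hcγ : c ≤ γ) (hγC : γ ≤ C) (hγ2 : 2 * γ ≤ (n : ℝ) ^ (β - 1))
    {sched : (Fin n → Fin n → ℕ) → (Fin n → Fin n → ℕ)} {pd : (Fin n → Fin n → ℕ) → ℝ≥0∞}
    (hmw : IsMaxWeight n sched)
    (hinv : IsInvariant n
      (kernelMW n (fun _ _ => bern ((1 - γ * (n : ℝ) ^ (-β)) / n)) sched) pd) :
    Etot n pd ≠ ⊤ ∧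
    |((Etot n pd).toReal - (n : ℝ) ^ (1 + β) / γ) / (n : ℝ) ^ (1 + β)| ≤
      (1 / (2 * c)) * (5 / (n : ℝ) + 64096 * (n : ℝ) ^ (-((β - 4) / 2)) +
        10 * C * (n : ℝ) ^ (-((β - 4) / 2))) := by
  have hN : (1 : ℝ) ≤ n := by exact_mod_cast hn
  have hN0 : (0 : ℝ) < n := by linarith
  have hx : 0 < (n : ℝ) ^ (-((β - 4) / 2)) := Real.rpow_pos_of_pos hN0 _
  have hx1 : (n : ℝ) ^ (-((β - 4) / 2)) ≤ 1 :=
    Real.rpow_le_one_of_one_le_of_nonpos hN (by linarith)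
  have hx2 : ((n : ℝ) ^ (-((β - 4) / 2))) ^ 2 = (n : ℝ) ^ (4 - β) := by
    rw [← Real.rpow_natCast, ← Real.rpow_mul hN0.le]; congr 1; push_cast; ring
  have hε : γ * (n : ℝ) ^ (-β) = γ * ((n : ℝ) ^ (-((β - 4) / 2))) ^ 2 / (n : ℝ) ^ 4 := by
    rw [hx2, mul_div_assoc, ← Real.rpow_natCast (n : ℝ) 4, ← Real.rpow_sub hN0]
    congr 2; push_cast; ring
  have hP : (n : ℝ) ^ (1 + β) = (n : ℝ) ^ 5 / ((n : ℝ) ^ (-((β - 4) / 2))) ^ 2 := by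
    rw [hx2, ← Real.rpow_natCast (n : ℝ) 5, ← Real.rpow_sub hN0]
    congr 1; push_cast; ring
  have hε0 : 0 < γ * (n : ℝ) ^ (-β) := mul_pos (by linarith) (Real.rpow_pos_of_pos hN0 _)
  have hεN : γ * (n : ℝ) ^ (-β) ≤ 1 / (2 * n) := by
    have h1 := mul_le_mul_of_nonneg_right hγ2 (Real.rpow_pos_of_pos hN0 (-β)).le
    rw [← Real.rpow_add hN0, show β - 1 + -β = -1 by ring, Real.rpow_neg_one] at h1
    have : 1 / (2 * (n : ℝ)) = (n : ℝ)⁻¹ / 2 := by field_simp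
    rw [this]; linarith
  have hm : 0 < (n : ℝ) ^ 3 / (n : ℝ) ^ (-((β - 4) / 2)) := by positivity
  obtain ⟨h1, h2⟩ := main_bound hn hm hε0 hεN hmw hinv
  exact ⟨h1, final_alg hN hx hx1 hc hcγ hγC hε hεN hP rfl h2⟩

end SwitchModel

/-- Corollary 6.2, MaxWeight part: optimal scaling of MaxWeight in the
simultaneous heavy-traffic / large-switch regime `ε_n = γ_n n^{−β}`, `β > 4`. -/
theorem maxweight_scaling_regime
    (β : ℝ) (hβ : 4 < β)
    (γ : ℕ → ℝ) (c C : ℝ) (hc : 0 < c)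
    (hγ : ∀ n : ℕ, 1 ≤ n → c ≤ γ n ∧ γ n ≤ C)
    (hγ2 : ∀ n : ℕ, 1 ≤ n → 2 * γ n ≤ (n : ℝ) ^ (β - 1))
    (sched : ∀ n : ℕ, (Fin n → Fin n → ℕ) → (Fin n → Fin n → ℕ))
    (pd : ∀ n : ℕ, (Fin n → Fin n → ℕ) → ℝ≥0∞)
    (hmw : ∀ n : ℕ, 1 ≤ n → IsMaxWeight n (sched n))
    (hinv : ∀ n : ℕ, 1 ≤ n →
      IsInvariant n
        (kernelMW n (fun _ _ => bern ((1 - γ n * (n : ℝ) ^ (-β)) / n)) (sched n)) (pd n)) :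
    Tendsto (fun n : ℕ =>
        ((Etot n (pd n)).toReal - (n : ℝ) ^ (1 + β) / γ n) / (n : ℝ) ^ (1 + β))
      atTop (nhds 0) ∧
    ∃ c' C' : ℝ, 0 < c' ∧ ∀ᶠ n : ℕ in atTop,
      ENNReal.ofReal (c' * (n : ℝ) ^ (1 + β)) ≤ Etot n (pd n) ∧
      Etot n (pd n) ≤ ENNReal.ofReal (C' * (n : ℝ) ^ (1 + β)) := by
  have hlim : Tendsto (fun n : ℕ =>
      ((Etot n (pd n)).toReal - (n : ℝ) ^ (1 + β) / γ n) / (n : ℝ) ^ (1 + β))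
      atTop (nhds 0) := by
    have hx : Tendsto (fun n : ℕ => (n : ℝ) ^ (-((β - 4) / 2))) atTop (nhds 0) :=
      (tendsto_rpow_neg_atTop (by linarith)).comp tendsto_natCast_atTop_atTop
    have hi : Tendsto (fun n : ℕ => (5 : ℝ) / (n : ℝ)) atTop (nhds 0) :=
      tendsto_const_div_atTop_nhds_zero_nat 5
    have hb : Tendsto (fun n : ℕ => (1 / (2 * c)) * (5 / (n : ℝ) +
        64096 * (n : ℝ) ^ (-((β - 4) / 2)) + 10 * C * (n : ℝ) ^ (-((β - 4) / 2))))
        atTop (nhds 0) := by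
      have := ((hi.add (hx.const_mul 64096)).add (hx.const_mul (10 * C))).const_mul (1 / (2 * c))
      simpa using this
    refine squeeze_zero_norm' ?_ hb
    filter_upwards [eventually_ge_atTop 1] with n hn
    rw [Real.norm_eq_abs]
    exact (final_bound hβ hn hc (hγ n hn).1 (hγ n hn).2 (hγ2 n hn) (hmw n hn) (hinv n hn)).2
  refine ⟨hlim, ?_⟩
  have hC : 0 < C := by
    have := hγ 1 le_rfl
    linarith [this.1, this.2]
  refine ⟨1 / (2 * C), 1 / c + 1, by positivity, ?_⟩
  have hC2 : (0 : ℝ) < 1 / (2 * C) := by positivity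
  filter_upwards [eventually_ge_atTop 1,
    hlim.eventually (Ioo_mem_nhds (neg_lt_zero.2 hC2) one_pos)] with n hn hI
  have htop :=
    (final_bound hβ hn hc (hγ n hn).1 (hγ n hn).2 (hγ2 n hn) (hmw n hn) (hinv n hn)).1
  obtain ⟨hcγ, hγC⟩ := hγ n hn
  have hγ0 : 0 < γ n := by linarith
  have hN0 : (0 : ℝ) < n := by exact_mod_cast hn
  have hP : 0 < (n : ℝ) ^ (1 + β) := Real.rpow_pos_of_pos hN0 _
  set P := (n : ℝ) ^ (1 + β)
  obtain ⟨hl, hu⟩ := hI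
  rw [lt_div_iff₀ hP] at hl
  rw [div_lt_iff₀ hP] at hu
  have g1 : 1 / C * P ≤ P / γ n := by
    rw [div_mul_eq_mul_div, one_mul]; gcongr
  have g2 : P / γ n ≤ 1 / c * P := by
    rw [div_mul_eq_mul_div, one_mul]; gcongr
  have g3 : 1 / (2 * C) * P = 1 / C * P / 2 := by field_simp
  rw [← ENNReal.ofReal_toReal htop]
  constructor
  · apply ENNReal.ofReal_le_ofReal
    rw [neg_mul] at hl
    linarith
  · apply ENNReal.ofReal_le_ofReal
    linarith
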